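/- arXiv:2508.07916 — 12 statements merged into one kernel-verified Lean document; each statement's English description precedes it below -/
import Mathlib

section
/- Let n be a positive integer. Then there is no binary isolation of the unary form n·x². Concretely: there is no positive definite binary quadratic form F(x,y) = Ax² + Bxy + Cy² with A, B, C ∈ ℤ such that F represents n·k² for every integer k ≥ 2 but F does not represent n. Equivalently, if a positive definite integral binary quadratic form represents n·k² for every integer k ≥ 2, then it represents n itself. -/
/-- If a positive definite integral binary quadratic form represents
`n * k ^ 2` for every integer `k ≥ 2`, then it represents `n` itself
(i.e. there is no binary isolation of the unary form `n • x²`). -/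
theorem no_binary_isolation_of_unary (n : ℤ) (hn : 0 < n)
    (A B C : ℤ) (hA : 0 < A) (hdisc : B ^ 2 - 4 * A * C < 0)
    (hrep : ∀ k : ℤ, 2 ≤ k → ∃ x y : ℤ, A * x ^ 2 + B * x * y + C * y ^ 2 = n * k ^ 2) :
    ∃ x y : ℤ, A * x ^ 2 + B * x * y + C * y ^ 2 = n := by
  obtain ⟨q, hq⟩ : ∃ q : ℕ, (q : ℤ) = 4 * (4 * A * C - B ^ 2) - 1 :=
    ⟨(4 * (4 * A * C - B ^ 2) - 1).toNat, Int.toNat_of_nonneg (by linarith)⟩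
  have hq3 : q % 4 = 3 := by
    generalize 4 * A * C - B ^ 2 = m at hq
    omega
  have hJ : jacobiSym (-1) q = -1 := by
    rw [jacobiSym.at_neg_one (Nat.odd_iff.mpr (by omega)), ZMod.χ₄_nat_three_mod_four hq3]
  obtain ⟨p, hp, hpq, hJp⟩ := jacobiSym.eq_neg_one_at_prime_divisor_of_eq_neg_one hJ
  haveI : Fact p.Prime := ⟨hp⟩
  rw [← jacobiSym.legendreSym.to_jacobiSym] at hJp
  have hpq' : (p : ℤ) ∣ 4 * (4 * A * C - B ^ 2) - 1 := by
    rw [← hq]; exact_mod_cast hpq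
  obtain ⟨t, ht⟩ := hpq'
  have hp2 : (2 : ℤ) ≤ p := by exact_mod_cast hp.two_le
  obtain ⟨x, y, hxy⟩ := hrep p hp2
  have hy : (p : ℤ) ∣ y := by
    refine (legendreSym.prime_dvd_of_eq_neg_one hJp
      (x := 2 * (2 * A * x + B * y)) (y := y) ?_).2
    exact ⟨16 * A * n * p - t * y ^ 2, by linear_combination 16 * A * hxy - y ^ 2 * ht⟩
  have hx : (p : ℤ) ∣ x := by
    refine (legendreSym.prime_dvd_of_eq_neg_one hJp
      (x := 2 * (2 * C * y + B * x)) (y := x) ?_).2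
    exact ⟨16 * C * n * p - t * x ^ 2, by linear_combination 16 * C * hxy - x ^ 2 * ht⟩
  obtain ⟨u, rfl⟩ := hx
  obtain ⟨v, rfl⟩ := hy
  refine ⟨u, v, ?_⟩
  have hp0 : (p : ℤ) ^ 2 ≠ 0 := by positivity
  apply mul_right_cancel₀ hp0
  linear_combination hxy
end

section
/- Let n be a positive integer and let f(x,y) = a x² + b x y + c y² be a primitive positive definite integral binary quadratic form of discriminant D = b² − 4ac < 0. Let p be a prime such that the Kronecker symbol (D/p) = −1, i.e., either p is odd and D is a quadratic non-residue modulo p, or p = 2 and D ≡ 5 (mod 8). If f represents n p², then f represents n. -/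
/-- For a primitive positive definite integral binary quadratic form `f`
of discriminant `D < 0` and a prime `p` with Kronecker symbol `(D/p) = -1`
(i.e. `p` odd and `D` a quadratic non-residue mod `p`, or `p = 2` and `D ≡ 5 (mod 8)`),
if `f` represents `n * p ^ 2` then `f` represents `n`. -/
theorem rep_np_sq_of_kronecker_neg_one (n : ℤ) (hn : 0 < n)
    (a b c : ℤ) (ha : 0 < a) (hprim : Int.gcd a (Int.gcd b c) = 1)
    (D : ℤ) (hD : D = b ^ 2 - 4 * a * c) (hDneg : D < 0)
    (p : ℕ) (hp : p.Prime)
    (hkron : (Odd p ∧ ¬ IsSquare (D : ZMod p)) ∨ (p = 2 ∧ D % 8 = 5))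
    (hrep : ∃ x y : ℤ, a * x ^ 2 + b * x * y + c * y ^ 2 = n * (p : ℤ) ^ 2) :
    ∃ x y : ℤ, a * x ^ 2 + b * x * y + c * y ^ 2 = n := by
  obtain ⟨x, y, h⟩ := hrep
  have key : (p : ℤ) ∣ x ∧ (p : ℤ) ∣ y := by
    rcases hkron with ⟨_, hns⟩ | ⟨rfl, h8⟩
    · haveI : Fact p.Prime := ⟨hp⟩
      have h' : (a : ZMod p) * x ^ 2 + b * x * y + c * y ^ 2 = 0 := by
        have := congrArg (Int.cast : ℤ → ZMod p) h
        push_cast at this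
        simpa using this
      have hD' : (D : ZMod p) = b ^ 2 - 4 * a * c := by
        rw [hD]; push_cast; ring
      have hy : (y : ZMod p) = 0 := by
        by_contra hy
        apply hns
        refine ⟨(2 * a * x + b * y) / y, ?_⟩
        rw [hD']
        field_simp
        linear_combination (-4 * (a : ZMod p)) * h'
      have ha0 : (a : ZMod p) ≠ 0 := by
        intro h0
        apply hns
        refine ⟨b, ?_⟩
        rw [hD', h0]; ring
      have hx : (x : ZMod p) = 0 := by
        simpa [hy, ha0] using h'
      exact ⟨(ZMod.intCast_zmod_eq_zero_iff_dvd x p).1 hx,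
        (ZMod.intCast_zmod_eq_zero_iff_dvd y p).1 hy⟩
    · have hb : Odd b := by
        rcases Int.even_or_odd b with ⟨k, rfl⟩ | hb
        · exfalso
          have : D = 4 * (k * k - a * c) := by rw [hD]; ring
          omega
        · exact hb
      have hac : Odd (a * c) := by
        obtain ⟨k, rfl⟩ := hb
        rcases Int.even_or_odd (a * c) with ⟨m, hm⟩ | hm
        · exfalso
          obtain ⟨j, hj⟩ := Int.even_mul_succ_self k
          have : D = 8 * j + 1 - 8 * m := by
            rw [hD]; linear_combination 4 * hj - 4 * hm
          omega
        · exact hm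
      have hev : Even (a * x ^ 2 + b * x * y + c * y ^ 2) := by
        rw [h]; exact ⟨n * 2, by push_cast; ring⟩
      obtain ⟨hao, hco⟩ := Int.odd_mul.1 hac
      rw [← Int.not_even_iff_odd] at hb hao hco
      simp only [Int.even_add, Int.even_mul, Int.even_pow] at hev
      simp only [Nat.cast_ofNat, ← even_iff_two_dvd]
      tauto
  obtain ⟨⟨u, rfl⟩, ⟨v, rfl⟩⟩ := key
  have hp0 : (p : ℤ) ^ 2 ≠ 0 := pow_ne_zero _ (by exact_mod_cast hp.ne_zero)
  exact ⟨u, v, mul_right_cancel₀ hp0 (by linear_combination h)⟩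
end

section
/- Let n be a positive integer and let f(x,y) = a x² + b x y + c y² be a primitive positive definite integral binary quadratic form of discriminant D = b² − 4ac < 0. Let p be a prime such that the Kronecker symbol (D/p) = 1 and p is represented by some primitive positive definite integral binary quadratic form g of discriminant D which is ambiguous, i.e., g is properly equivalent to its opposite g⁻(x,y) = g(x,−y). If f represents n p², then f represents n. -/
/-- Two binary quadratic forms `(a,b,c)` and `(a',b',c')` are properly equivalent. -/
def ProperEquiv (a b c a' b' c' : ℤ) : Prop :=
  ∃ r s t u : ℤ, r * u - s * t = 1 ∧ ∀ x y : ℤ,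
    a' * x ^ 2 + b' * x * y + c' * y ^ 2
      = a * (r * x + s * y) ^ 2 + b * (r * x + s * y) * (t * x + u * y)
          + c * (t * x + u * y) ^ 2

lemma aux_sq_dvd {p : ℤ} (hp : Prime p) {X Y : ℤ} (h : p ^ 2 ∣ X * Y) (hs : ¬ p ∣ X + Y) :
    p ^ 2 ∣ X ∨ p ^ 2 ∣ Y := by
  by_cases hX : p ∣ X
  · left
    have hY : ¬ p ∣ Y := fun hY => hs (dvd_add hX hY)
    exact hp.pow_dvd_of_dvd_mul_right 2 hY h
  · right
    exact hp.pow_dvd_of_dvd_mul_left 2 hX h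

lemma aux_finish {p : ℤ} (hp : Prime p) (n a b c k v x y : ℤ)
    (hk : k ^ 2 + b * k * v + a * c * v ^ 2 = p ^ 2)
    (hf : a * x ^ 2 + b * x * y + c * y ^ 2 = n * p ^ 2)
    (h1 : p ^ 2 ∣ k * x - c * v * y) (h2 : p ^ 2 ∣ a * v * x + (k + b * v) * y) :
    ∃ x y : ℤ, a * x ^ 2 + b * x * y + c * y ^ 2 = n := by
  obtain ⟨X, hX⟩ := h1
  obtain ⟨Y, hY⟩ := h2
  refine ⟨X, Y, ?_⟩
  have h0 : p ^ 2 * p ^ 2 ≠ 0 := by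
    have := hp.ne_zero
    positivity
  apply mul_left_cancel₀ h0
  calc p ^ 2 * p ^ 2 * (a * X ^ 2 + b * X * Y + c * Y ^ 2)
      = a * (p ^ 2 * X) ^ 2 + b * (p ^ 2 * X) * (p ^ 2 * Y) + c * (p ^ 2 * Y) ^ 2 := by ring
    _ = (k ^ 2 + b * k * v + a * c * v ^ 2) * (a * x ^ 2 + b * x * y + c * y ^ 2) := by
        rw [← hX, ← hY]; ring
    _ = p ^ 2 * p ^ 2 * n := by rw [hk, hf]; ring

lemma aux_descend {p : ℤ} (hp : Prime p) (n a b c k v x y : ℤ)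
    (hk : k ^ 2 + b * k * v + a * c * v ^ 2 = p ^ 2)
    (hu : ¬ p ∣ 2 * k + b * v)
    (hf : a * x ^ 2 + b * x * y + c * y ^ 2 = n * p ^ 2) :
    ∃ x y : ℤ, a * x ^ 2 + b * x * y + c * y ^ 2 = n := by
  -- the conjugate multiplier
  have hk' : (k + b * v) ^ 2 + b * (k + b * v) * (-v) + a * c * (-v) ^ 2 = p ^ 2 := by
    rw [← hk]; ring
  by_cases hx : p ∣ x
  · by_cases hy : p ∣ y
    · obtain ⟨X, rfl⟩ := hx
      obtain ⟨Y, rfl⟩ := hy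
      refine ⟨X, Y, ?_⟩
      have h0 : p ^ 2 ≠ 0 := by
        have := hp.ne_zero
        positivity
      apply mul_left_cancel₀ h0
      linear_combination hf
    · have hd : p ^ 2 ∣ (a * v * x + (k + b * v) * y) * (-(a * v * x) + k * y) :=
        ⟨y ^ 2 - a * v ^ 2 * n, by linear_combination y ^ 2 * hk - a * v ^ 2 * hf⟩
      have hs : ¬ p ∣ (a * v * x + (k + b * v) * y) + (-(a * v * x) + k * y) := by
        have : (a * v * x + (k + b * v) * y) + (-(a * v * x) + k * y) = (2 * k + b * v) * y := by
          ring
        rw [this]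
        intro h
        exact (hp.dvd_or_dvd h).elim hu hy
      rcases aux_sq_dvd hp hd hs with h | h
      · refine aux_finish hp n a b c k v x y hk hf ?_ h
        apply hp.pow_dvd_of_dvd_mul_left 2 hy
        have : y * (k * x - c * v * y) = x * (a * v * x + (k + b * v) * y) - p ^ 2 * (v * n) := by
          linear_combination -v * hf
        rw [this]
        exact dvd_sub (h.mul_left _) (dvd_mul_right _ _)
      · refine aux_finish hp n a b c (k + b * v) (-v) x y hk' hf ?_ ?_
        · apply hp.pow_dvd_of_dvd_mul_left 2 hy
          have : y * ((k + b * v) * x - c * (-v) * y)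
              = x * (-(a * v * x) + k * y) + p ^ 2 * (v * n) := by
            linear_combination v * hf
          rw [this]
          exact dvd_add (h.mul_left _) (dvd_mul_right _ _)
        · convert h using 1; ring
  · have hd : p ^ 2 ∣ (k * x - c * v * y) * ((k + b * v) * x + c * v * y) :=
      ⟨x ^ 2 - c * v ^ 2 * n, by linear_combination x ^ 2 * hk - c * v ^ 2 * hf⟩
    have hs : ¬ p ∣ (k * x - c * v * y) + ((k + b * v) * x + c * v * y) := by
      have : (k * x - c * v * y) + ((k + b * v) * x + c * v * y) = (2 * k + b * v) * x := by
        ring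
      rw [this]
      intro h
      exact (hp.dvd_or_dvd h).elim hu hx
    rcases aux_sq_dvd hp hd hs with h | h
    · refine aux_finish hp n a b c k v x y hk hf h ?_
      apply hp.pow_dvd_of_dvd_mul_left 2 hx
      have : x * (a * v * x + (k + b * v) * y) = y * (k * x - c * v * y) + p ^ 2 * (v * n) := by
        linear_combination v * hf
      rw [this]
      exact dvd_add (h.mul_left _) (dvd_mul_right _ _)
    · refine aux_finish hp n a b c (k + b * v) (-v) x y hk' hf ?_ ?_
      · convert h using 1; ring
      · apply hp.pow_dvd_of_dvd_mul_left 2 hx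
        have : x * (a * (-v) * x + (k + b * v + b * (-v)) * y)
            = y * ((k + b * v) * x + c * v * y) - p ^ 2 * (v * n) := by
          linear_combination -v * hf
        rw [this]
        exact dvd_sub (h.mul_left _) (dvd_mul_right _ _)

/-- a form `(p,B,C)` with an improper automorphism gives a primitive element of norm `p ^ 2`. -/
lemma aux_reduced {p : ℤ} (hp : Prime p) (B C r s t w : ℤ)
    (hD : ¬ p ∣ B ^ 2 - 4 * p * C) (hdet : r * w - s * t = -1)
    (h2 : 2 * p * r * s + B * (r * w + s * t) + 2 * C * t * w = B) :
    ¬ p ∣ 2 * p * r + B * t := by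
  have hB : ¬ p ∣ B := by
    rintro ⟨d, rfl⟩
    exact hD ⟨p * d ^ 2 - 4 * C, by ring⟩
  intro h
  have h3 : p ∣ B * t := (dvd_add_right ⟨2 * r, by ring⟩).1 h
  rcases hp.dvd_or_dvd h3 with h4 | ⟨d, rfl⟩
  · exact hB h4
  · apply hB
    refine ⟨r * s + B * s * d + C * d * w, ?_⟩
    have : 2 * B = 2 * (p * (r * s + B * s * d + C * d * w)) := by
      linear_combination -h2 + B * hdet
    linarith

lemma aux_basis {p : ℤ} (hp : Prime p) (a b c x y : ℤ)
    (h : a * x ^ 2 + b * x * y + c * y ^ 2 = p) : IsCoprime x y := by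
  rw [Int.isCoprime_iff_gcd_eq_one]
  obtain ⟨X, hX⟩ := Int.gcd_dvd_left x y
  obtain ⟨Y, hY⟩ := Int.gcd_dvd_right x y
  set g : ℤ := (Int.gcd x y : ℤ) with hg
  have : g * g ∣ p := ⟨a * X ^ 2 + b * X * Y + c * Y ^ 2, by rw [← h, hX, hY]; ring⟩
  have hu : IsUnit g := hp.irreducible.squarefree g this
  have := Int.isUnit_iff_natAbs_eq.1 hu
  simpa [hg] using this

/-- existence of the primitive element of norm `p ^ 2`. -/
lemma aux_exists {p : ℤ} (hp : Prime p) (a b c : ℤ) (hD : ¬ p ∣ b ^ 2 - 4 * a * c)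
    (hrep : ∃ x y : ℤ, a * x ^ 2 + b * x * y + c * y ^ 2 = p)
    (hamb : ProperEquiv a b c a (-b) c) :
    ∃ u v : ℤ, ¬ p ∣ u ∧ u ^ 2 - (b ^ 2 - 4 * a * c) * v ^ 2 = 4 * p ^ 2 := by
  obtain ⟨x, y, hxy⟩ := hrep
  obtain ⟨l, m, hlm⟩ := aux_basis hp a b c x y hxy
  obtain ⟨r, s, t, w, hdet, hall⟩ := hamb
  -- the improper automorphism, in the basis `(x, y)`, `(-m, l)`
  have hdisc : (2 * a * x * (-m) + b * (x * l - m * y) + 2 * c * y * l) ^ 2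
      - 4 * p * (a * m ^ 2 - b * m * l + c * l ^ 2) = b ^ 2 - 4 * a * c := by
    rw [← hxy]
    linear_combination (b ^ 2 - 4 * a * c) * (l * x + m * y + 1) * hlm
  have e1 := hall 1 0
  have e2 := hall 0 1
  have e3 := hall 1 1
  have c1 : a * r ^ 2 + b * r * t + c * t ^ 2 = a := by linear_combination -e1
  have c2 : a * s ^ 2 + b * s * w + c * w ^ 2 = c := by linear_combination -e2
  have c3 : 2 * a * r * s + b * (r * w + s * t) + 2 * c * t * w = -b := by
    linear_combination -e3 + e1 + e2
  -- images of the two basis vectors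
  obtain ⟨X1, hX1⟩ : ∃ z, z = r * x - s * y := ⟨_, rfl⟩
  obtain ⟨Y1, hY1⟩ : ∃ z, z = t * x - w * y := ⟨_, rfl⟩
  obtain ⟨X2, hX2⟩ : ∃ z, z = -r * m - s * l := ⟨_, rfl⟩
  obtain ⟨Y2, hY2⟩ : ∃ z, z = -t * m - w * l := ⟨_, rfl⟩
  have g1 : a * X1 ^ 2 + b * X1 * Y1 + c * Y1 ^ 2 = p := by
    rw [hX1, hY1, ← hxy]
    linear_combination x ^ 2 * c1 + y ^ 2 * c2 - x * y * c3
  have g2 : 2 * a * X1 * X2 + b * (X1 * Y2 + X2 * Y1) + 2 * c * Y1 * Y2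
      = 2 * a * x * (-m) + b * (x * l - m * y) + 2 * c * y * l := by
    rw [hX1, hY1, hX2, hY2]
    linear_combination (-2 * x * m) * c1 + (2 * y * l) * c2 - (x * l - m * y) * c3
  have gd : X1 * Y2 - X2 * Y1 = -1 := by
    rw [hX1, hY1, hX2, hY2]
    linear_combination (-(l * x + m * y)) * hdet - hlm
  -- coordinates of the images
  obtain ⟨R, hR⟩ : ∃ z, z = l * X1 + m * Y1 := ⟨_, rfl⟩
  obtain ⟨T, hT⟩ : ∃ z, z = x * Y1 - y * X1 := ⟨_, rfl⟩
  obtain ⟨S, hS⟩ : ∃ z, z = l * X2 + m * Y2 := ⟨_, rfl⟩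
  obtain ⟨W, hW⟩ : ∃ z, z = x * Y2 - y * X2 := ⟨_, rfl⟩
  have i1 : X1 = R * x - T * m := by rw [hR, hT]; linear_combination -X1 * hlm
  have i2 : Y1 = R * y + T * l := by rw [hR, hT]; linear_combination -Y1 * hlm
  have i3 : X2 = S * x - W * m := by rw [hS, hW]; linear_combination -X2 * hlm
  have i4 : Y2 = S * y + W * l := by rw [hS, hW]; linear_combination -Y2 * hlm
  have dRW : R * W - S * T = -1 := by
    rw [hR, hT, hS, hW]
    linear_combination (l * x + m * y) * gd - hlm
  obtain ⟨B, hB⟩ : ∃ z, z = 2 * a * x * (-m) + b * (x * l - m * y) + 2 * c * y * l := ⟨_, rfl⟩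
  obtain ⟨C, hC⟩ : ∃ z, z = a * m ^ 2 - b * m * l + c * l ^ 2 := ⟨_, rfl⟩
  rw [← hB, ← hC] at hdisc
  rw [← hB] at g2
  have k1 : p * R ^ 2 + B * R * T + C * T ^ 2 = p := by
    rw [i1, i2] at g1
    rw [hB, hC]
    linear_combination g1 - R ^ 2 * hxy
  have k2 : 2 * p * R * S + B * (R * W + S * T) + 2 * C * T * W = B := by
    rw [i1, i2, i3, i4] at g2
    linear_combination g2 - (2 * R * S) * hxy + (R * W + S * T) * hB + 2 * T * W * hC
  refine ⟨2 * p * R + B * T, T, aux_reduced hp B C R S T W (by rwa [hdisc]) dRW k2, ?_⟩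
  rw [← hdisc]
  linear_combination 4 * p * k1

/-- For a primitive positive definite integral binary quadratic form `f`
of discriminant `D < 0` and a prime `p` with `(D/p) = 1` which is represented by some
ambiguous primitive positive definite form of discriminant `D`, if `f` represents
`n * p ^ 2` then `f` represents `n`. -/
theorem rep_np_sq_of_ambiguous (n : ℤ) (hn : 0 < n)
    (a b c : ℤ) (ha : 0 < a) (hprim : Int.gcd a (Int.gcd b c) = 1)
    (D : ℤ) (hD : D = b ^ 2 - 4 * a * c) (hDneg : D < 0)
    (p : ℕ) (hp : p.Prime)
    (hkron : (Odd p ∧ ¬ (p : ℤ) ∣ D ∧ IsSquare (D : ZMod p)) ∨ (p = 2 ∧ D % 8 = 1))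
    (hamb : ∃ a' b' c' : ℤ, 0 < a' ∧ Int.gcd a' (Int.gcd b' c') = 1 ∧
      b' ^ 2 - 4 * a' * c' = D ∧
      (∃ x y : ℤ, a' * x ^ 2 + b' * x * y + c' * y ^ 2 = (p : ℤ)) ∧
      ProperEquiv a' b' c' a' (-b') c')
    (hrep : ∃ x y : ℤ, a * x ^ 2 + b * x * y + c * y ^ 2 = n * (p : ℤ) ^ 2) :
    ∃ x y : ℤ, a * x ^ 2 + b * x * y + c * y ^ 2 = n := by
  have hpp : Prime (p : ℤ) := Nat.prime_iff_prime_int.1 hp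
  have hpD : ¬ (p : ℤ) ∣ D := by
    rcases hkron with ⟨_, h, _⟩ | ⟨rfl, h⟩
    · exact h
    · push_cast
      omega
  obtain ⟨a', b', c', _, _, hD', hrep', hamb'⟩ := hamb
  obtain ⟨x, y, hxy⟩ := hrep
  obtain ⟨u, v, hu, huv⟩ := aux_exists hpp a' b' c' (by rwa [hD']) hrep' hamb'
  rw [hD', hD] at huv
  have hev : (2 : ℤ) ∣ u - b * v := by
    have h2 : (2 : ℤ) ∣ (u - b * v) * (u + b * v) :=
      ⟨2 * (p : ℤ) ^ 2 - 2 * a * c * v ^ 2, by linear_combination huv⟩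
    rcases Int.prime_two.dvd_or_dvd h2 with h | h
    · exact h
    · have : u - b * v = (u + b * v) - 2 * (b * v) := by ring
      rw [this]
      exact dvd_sub h (dvd_mul_right _ _)
  obtain ⟨k, hk⟩ := hev
  have hu' : u = 2 * k + b * v := by linarith
  subst hu'
  refine aux_descend hpp n a b c k v x y ?_ hu hxy
  have : 4 * (k ^ 2 + b * k * v + a * c * v ^ 2) = 4 * (p : ℤ) ^ 2 := by
    linear_combination huv
  linarith
end

section
/- Let n be a positive integer and let D be a negative integer with D ≡ 0 or 1 (mod 4) and gcd(n, D) = 1. Then the following are equivalent: (1) no primitive positive definite integral binary quadratic form of discriminant D represents n; (2) there is a prime p dividing n to an odd power (i.e., a prime p dividing the squarefree part of n) such that the Kronecker symbol (D/p) = −1, i.e., either p is odd and D is a quadratic non-residue modulo p, or p = 2 and D ≡ 5 (mod 8). -/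
lemma aux_sq8 (b : ℤ) (hb : Odd b) : b ^ 2 % 8 = 1 := by
  have := Int.eight_dvd_sq_sub_one_of_odd hb
  omega

lemma aux_isSquare (p : ℕ) (D : ℤ) : IsSquare (D : ZMod p) ↔ ∃ r : ℤ, (p : ℤ) ∣ r ^ 2 - D := by
  constructor
  · rintro ⟨s, hs⟩
    obtain ⟨r, rfl⟩ := ZMod.intCast_surjective s
    refine ⟨r, ?_⟩
    rw [← ZMod.intCast_zmod_eq_zero_iff_dvd]
    push_cast
    rw [hs]; ring
  · rintro ⟨r, hr⟩
    refine ⟨r, ?_⟩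
    have := (ZMod.intCast_zmod_eq_zero_iff_dvd _ p).2 hr
    push_cast at this
    linear_combination -this

lemma aux_descent (p : ℕ) (hp : p.Prime) (a b c : ℤ)
    (H : ∀ x y : ℤ, (p : ℤ) ∣ a * x ^ 2 + b * x * y + c * y ^ 2 → (p : ℤ) ∣ x ∧ (p : ℤ) ∣ y)
    (n : ℕ) : 0 < n → ∀ x y : ℤ, a * x ^ 2 + b * x * y + c * y ^ 2 = (n : ℤ) →
      Even (n.factorization p) := by
  induction n using Nat.strong_induction_on with
  | _ n ih =>
    intro hn x y hxy
    by_cases hpn : p ∣ n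
    · obtain ⟨⟨x', rfl⟩, ⟨y', rfl⟩⟩ := H x y (by rw [hxy]; exact_mod_cast hpn)
      have h2 : ((p ^ 2 : ℕ) : ℤ) ∣ (n : ℤ) :=
        ⟨a * x' ^ 2 + b * x' * y' + c * y' ^ 2, by rw [← hxy]; push_cast; ring⟩
      obtain ⟨m, rfl⟩ := Int.natCast_dvd_natCast.1 h2
      have hm : 0 < m := Nat.pos_of_ne_zero (by rintro rfl; simp at hn)
      have hp0 : (p : ℤ) ≠ 0 := by exact_mod_cast hp.ne_zero
      have hlt : m < p ^ 2 * m := by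
        have := hp.two_le
        nlinarith [Nat.pow_le_pow_left this 2]
      have := ih m hlt hm x' y' (by
        apply mul_left_cancel₀ (pow_ne_zero 2 hp0)
        push_cast at hxy
        rw [← hxy]; ring)
      rw [Nat.factorization_mul (pow_ne_zero 2 hp.ne_zero) hm.ne', Finsupp.add_apply,
        hp.factorization_pow, Finsupp.single_eq_same]
      exact even_two.add this
    · rw [Nat.factorization_eq_zero_of_not_dvd hpn]; exact Even.zero

lemma aux_odd (p : ℕ) (hp : p.Prime) (hodd : Odd p) (D a b c : ℤ) (hD : b ^ 2 - 4 * a * c = D)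
    (hns : ¬ IsSquare (D : ZMod p)) (x y : ℤ)
    (h : (p : ℤ) ∣ a * x ^ 2 + b * x * y + c * y ^ 2) : (p : ℤ) ∣ x ∧ (p : ℤ) ∣ y := by
  have := Fact.mk hp
  have h2 : (2 : ZMod p) ≠ 0 := by
    intro h0
    have h1 : ((2 : ℕ) : ZMod p) = 0 := by exact_mod_cast h0
    rw [ZMod.natCast_eq_zero_iff] at h1
    have := (Nat.prime_dvd_prime_iff_eq hp Nat.prime_two).1 h1
    subst this
    exact absurd hodd (by decide)
  rw [← ZMod.intCast_zmod_eq_zero_iff_dvd] at h ⊢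
  rw [← ZMod.intCast_zmod_eq_zero_iff_dvd]
  have hD' : (b : ZMod p) ^ 2 - 4 * a * c = D := by rw [← hD]; push_cast; ring
  push_cast at h
  have hy : (y : ZMod p) = 0 := by
    by_contra hy
    apply hns
    refine ⟨(2 * a * x + b * y) / y, ?_⟩
    field_simp
    rw [← hD']
    linear_combination -4 * a * h
  refine ⟨?_, hy⟩
  have ha : (a : ZMod p) ≠ 0 := by
    intro ha
    apply hns
    exact ⟨b, by rw [← hD', ha]; ring⟩
  rw [hy] at h
  simpa [ha] using h

lemma aux_two (D a b c : ℤ) (hD : b ^ 2 - 4 * a * c = D) (h5 : D % 8 = 5) (x y : ℤ)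
    (h : (2 : ℤ) ∣ a * x ^ 2 + b * x * y + c * y ^ 2) : (2 : ℤ) ∣ x ∧ (2 : ℤ) ∣ y := by
  have hb : Odd b := by
    by_contra hb
    obtain ⟨k, rfl⟩ := Int.not_odd_iff_even.1 hb
    have : D = 4 * (k ^ 2 - a * c) := by rw [← hD]; ring
    omega
  have hb8 := aux_sq8 b hb
  have hac : Odd (a * c) := by
    by_contra hb
    obtain ⟨k, hk⟩ := Int.not_odd_iff_even.1 hb
    have : D = b ^ 2 - 8 * k := by rw [← hD]; linear_combination -4 * hk
    omega
  obtain ⟨ha, hc⟩ := Int.odd_mul.1 hac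
  rw [← even_iff_two_dvd] at *
  rw [← even_iff_two_dvd]
  simp only [← Int.not_even_iff_odd] at ha hb hc
  simp only [Int.even_add, Int.even_mul, Int.even_pow] at h
  tauto

lemma aux_sqrt (D : ℤ) (hDmod : D % 4 = 0 ∨ D % 4 = 1) (m : ℕ) : Squarefree m →
    (∀ p : ℕ, p.Prime → p ∣ m → (Odd p ∧ IsSquare (D : ZMod p)) ∨ (p = 2 ∧ D % 8 = 1)) →
    ∃ b : ℤ, 4 * (m : ℤ) ∣ b ^ 2 - D := by
  induction m using induction_on_primes with
  | zero => intro h; exact absurd h not_squarefree_zero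
  | one =>
    intro _ _
    rcases hDmod with h | h
    · exact ⟨0, by push_cast; omega⟩
    · exact ⟨1, by push_cast; omega⟩
  | prime_mul p m hp ih =>
    intro hsq H
    obtain ⟨b, hb⟩ := ih hsq.of_mul_right (fun q hq hqm => H q hq (hqm.mul_left p))
    have hcop : Nat.Coprime p m := Nat.coprime_of_squarefree_mul hsq
    rcases H p hp (dvd_mul_right p m) with ⟨hodd, hs⟩ | ⟨rfl, h8⟩
    · obtain ⟨r, hr⟩ := (aux_isSquare p D).1 hs
      have h4 : Nat.Coprime p (4 * m) := by
        refine Nat.Coprime.mul_right ?_ hcop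
        exact Nat.Coprime.pow_right 2 (Nat.coprime_two_right.2 hodd)
      have hc : IsCoprime (p : ℤ) ((4 * m : ℕ) : ℤ) := Nat.isCoprime_iff_coprime.2 h4
      obtain ⟨u, v, huv⟩ := id hc
      refine ⟨u * p * b + v * (4 * m : ℕ) * r, ?_⟩
      have := hc.mul_dvd (z := (u * p * b + v * (4 * m : ℕ) * r) ^ 2 - D) ?_ ?_
      · refine (dvd_of_eq ?_).trans this; push_cast; ring
      · obtain ⟨k, hk⟩ := hr
        have e : u * p * b + v * (4 * m : ℕ) * r = r + p * (u * (b - r)) := by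
          linear_combination r * huv
        rw [e]
        exact ⟨k + 2 * r * (u * (b - r)) + p * (u * (b - r)) ^ 2, by linear_combination hk⟩
      · obtain ⟨k, hk⟩ := hb
        have e : u * p * b + v * (4 * m : ℕ) * r = b + (4 * m : ℕ) * (v * (r - b)) := by
          linear_combination b * huv
        rw [e]
        exact ⟨k + 2 * b * (v * (r - b)) + (4 * m : ℕ) * (v * (r - b)) ^ 2, by
          push_cast; linear_combination hk⟩
    · refine ⟨b, ?_⟩
      have hbo : Odd b := by
        by_contra hbe
        obtain ⟨k, rfl⟩ := Int.not_odd_iff_even.1 hbe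
        have h4 : (4 : ℤ) ∣ (k + k) ^ 2 - D := (dvd_mul_right _ _).trans hb
        have : (k + k) ^ 2 = 4 * k ^ 2 := by ring
        omega
      have hb8 := aux_sq8 b hbo
      have h8d : (8 : ℤ) ∣ b ^ 2 - D := by omega
      have hc : IsCoprime ((8 : ℕ) : ℤ) (m : ℤ) :=
        Nat.isCoprime_iff_coprime.2 (Nat.Coprime.pow_left 3 hcop)
      have := hc.mul_dvd (by exact_mod_cast h8d) ((dvd_mul_left _ _).trans hb)
      refine (dvd_of_eq ?_).trans this; push_cast; ring

/-- For `D < 0` with `D ≡ 0, 1 (mod 4)` and `gcd(n, D) = 1`, no primitive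
positive definite integral binary quadratic form of discriminant `D` represents `n`
if and only if there is a prime `p` dividing `n` to an odd power with `(D/p) = -1`. -/
theorem not_rep_iff_exists_bad_prime (n : ℕ) (hn : 0 < n)
    (D : ℤ) (hDneg : D < 0) (hDmod : D % 4 = 0 ∨ D % 4 = 1)
    (hcop : Int.gcd (n : ℤ) D = 1) :
    (¬ ∃ a b c x y : ℤ, 0 < a ∧ Int.gcd a (Int.gcd b c) = 1 ∧
        b ^ 2 - 4 * a * c = D ∧ a * x ^ 2 + b * x * y + c * y ^ 2 = (n : ℤ)) ↔
      (∃ p : ℕ, p.Prime ∧ Odd (n.factorization p) ∧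
        ((Odd p ∧ ¬ IsSquare (D : ZMod p)) ∨ (p = 2 ∧ D % 8 = 5))) := by
  constructor
  · intro hno
    by_contra hbad
    push Not at hbad
    apply hno
    obtain ⟨m, k, hk, hsq⟩ := Nat.sq_mul_squarefree n
    have hm0 : m ≠ 0 := hsq.ne_zero
    have hk0 : k ≠ 0 := by rintro rfl; simp at hk; omega
    obtain ⟨b, c, hb⟩ := aux_sqrt D hDmod m hsq (by
      intro p hp hpm
      have hpn : p ∣ n := hk ▸ hpm.mul_left _
      have hf : Odd (n.factorization p) := by
        rw [← hk, Nat.factorization_mul (pow_ne_zero 2 hk0) hm0, Nat.factorization_pow]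
        have h1 : m.factorization p = 1 :=
          le_antisymm (hsq.natFactorization_le_one p)
            (hp.factorization_pos_of_dvd hm0 hpm)
        simp [h1]
      obtain ⟨h1, h2⟩ := hbad p hp hf
      rcases hp.eq_two_or_odd' with rfl | hodd
      · right
        refine ⟨rfl, ?_⟩
        have h5 := h2 rfl
        have : ¬ (2 : ℤ) ∣ D := by
          intro h
          have := Int.dvd_gcd (by exact_mod_cast hpn : (2 : ℤ) ∣ n) h
          rw [hcop] at this
          norm_num at this
        omega
      · exact Or.inl ⟨hodd, h1 hodd⟩)
    refine ⟨m, b, c, k, 0, by positivity, ?_, by linear_combination hb, ?_⟩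
    · have h1 : (Int.gcd (m : ℤ) (Int.gcd b c) : ℤ) ∣ m := Int.gcd_dvd_left _ _
      have h2 : (Int.gcd (m : ℤ) (Int.gcd b c) : ℤ) ∣ b :=
        (Int.gcd_dvd_right _ _).trans (Int.gcd_dvd_left _ _)
      have h3 : (Int.gcd (m : ℤ) (Int.gcd b c) : ℤ) ∣ D := by
        have e : D = b * b - m * (4 * c) := by linear_combination -hb
        rw [e]
        exact dvd_sub (h2.mul_right _) (h1.mul_right _)
      have h4 : (Int.gcd (m : ℤ) (Int.gcd b c) : ℤ) ∣ n :=
        h1.trans ⟨(k : ℤ) ^ 2, by rw [← hk]; push_cast; ring⟩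
      have := Int.dvd_gcd h4 h3
      rw [hcop] at this
      exact Nat.dvd_one.1 (by exact_mod_cast this)
    · rw [← hk]; push_cast; ring
  · rintro ⟨p, hp, hodd, hcase⟩ ⟨a, b, c, x, y, -, -, hD, hxy⟩
    rw [← Nat.not_even_iff_odd] at hodd
    apply hodd
    refine aux_descent p hp a b c ?_ n hn x y hxy
    rcases hcase with ⟨ho, hns⟩ | ⟨rfl, h5⟩
    · exact aux_odd p hp ho D a b c hD hns
    · exact aux_two D a b c hD h5
end

section
/- Let D be a negative integer with D ≡ 0 or 1 (mod 4), let f(x,y) = a x² + b x y + c y² be a primitive positive definite integral binary quadratic form of discriminant D, let n be a positive integer, and let p be a prime not dividing D such that f represents n p². Then n is represented by f over ℤ_q for every prime q; that is, for every prime q there exist q-adic integers x, y ∈ ℤ_q with a x² + b x y + c y² = n. -/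
lemma quad_root {p : ℕ} [Fact p.Prime] (α β γ : ℤ_[p]) (hα : ‖α‖ < 1) (hβ : ‖β‖ = 1) :
    ∃ t : ℤ_[p], α * t ^ 2 + β * t + γ = 0 := by
  obtain ⟨u, rfl⟩ := PadicInt.isUnit_iff.2 hβ
  obtain ⟨δ, hδ⟩ : ∃ δ : ℤ_[p], (u : ℤ_[p]) * δ = 1 := ⟨_, u.mul_inv⟩
  set β : ℤ_[p] := (u : ℤ_[p])
  let F : Polynomial ℤ_[p] := Polynomial.C α * Polynomial.X ^ 2 + Polynomial.C β * Polynomial.X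
    + Polynomial.C γ
  have hF : ∀ t, F.aeval t = α * t ^ 2 + β * t + γ := by intro t; simp [F]
  have hF' : ∀ t, F.derivative.aeval t = α * (2 * t) + β := by
    intro t; simp [F]; exact Or.inl (Or.inl one_add_one_eq_two)
  have hs : ∀ s : ℤ_[p], ‖α * s‖ < 1 := by
    intro s
    rw [norm_mul]
    exact lt_of_le_of_lt (mul_le_of_le_one_right (norm_nonneg _) (PadicInt.norm_le_one s)) hα
  have h := hensels_lemma (F := F) (a := -γ * δ) (by
    rw [hF, hF']
    have e : α * (-γ * δ) ^ 2 + β * (-γ * δ) + γ = α * (-γ * δ) ^ 2 := by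
      linear_combination (-γ) * hδ
    have e2 : ‖α * (2 * (-γ * δ)) + β‖ = 1 := by
      rw [PadicInt.norm_add_eq_max_of_ne (by rw [hβ]; exact (hs _).ne), hβ]
      exact max_eq_right (hs _).le
    rw [e, e2, one_pow]
    exact hs _)
  obtain ⟨z, hz, _⟩ := h
  exact ⟨z, by rw [← hF]; exact hz⟩

/-- `n` is represented by the binary quadratic form `(a, b, c)` over the `q`-adic
integers `ℤ_[q]`. -/
def RepresentedOverZq (a b c n : ℤ) (q : ℕ) [Fact q.Prime] : Prop :=
  ∃ x y : ℤ_[q], (a : ℤ_[q]) * x ^ 2 + (b : ℤ_[q]) * x * y + (c : ℤ_[q]) * y ^ 2 = (n : ℤ_[q])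

/-- If a primitive positive definite integral binary quadratic form `f` of
discriminant `D < 0`, `D ≡ 0, 1 (mod 4)`, represents `n * p ^ 2` for a prime `p ∤ D`,
then `n` is represented by `f` over `ℤ_q` for every prime `q` (i.e. by the genus of `f`). -/
theorem rep_genus_of_rep_np_sq (D : ℤ) (hDneg : D < 0) (hDmod : D % 4 = 0 ∨ D % 4 = 1)
    (a b c : ℤ) (ha : 0 < a) (hprim : Int.gcd a (Int.gcd b c) = 1)
    (hD : b ^ 2 - 4 * a * c = D)
    (n : ℤ) (hn : 0 < n) (p : ℕ) (hp : p.Prime) (hpD : ¬ (p : ℤ) ∣ D)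
    (hrep : ∃ x y : ℤ, a * x ^ 2 + b * x * y + c * y ^ 2 = n * (p : ℤ) ^ 2) :
    ∀ (q : ℕ) (hq : Fact q.Prime), @RepresentedOverZq a b c n q hq := by
  intro q hq
  obtain ⟨x, y, hxy⟩ := hrep
  unfold RepresentedOverZq
  have hcast : (a : ℤ_[q]) * x ^ 2 + b * x * y + c * y ^ 2 = n * (p : ℤ_[q]) ^ 2 := by
    exact_mod_cast congrArg (Int.cast : ℤ → ℤ_[q]) hxy
  by_cases hqp : q = p
  · subst hqp
    have hunit : ∀ z : ℤ, ¬ (q : ℤ) ∣ z → ‖(z : ℤ_[q])‖ = 1 := by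
      intro z hz
      refine le_antisymm (PadicInt.norm_le_one _) (not_lt.1 fun h => hz ?_)
      exact (PadicInt.norm_int_lt_one_iff_dvd z).1 h
    have hfv : ‖((a * x ^ 2 + b * x * y + c * y ^ 2 : ℤ) : ℤ_[q])‖ < 1 := by
      rw [PadicInt.norm_int_lt_one_iff_dvd, hxy]
      exact ⟨n * q, by ring⟩
    by_cases h1 : (q : ℤ) ∣ 2 * a * x + b * y
    · by_cases h2 : (q : ℤ) ∣ b * x + 2 * c * y
      · have hpr : Prime (q : ℤ) := Nat.prime_iff_prime_int.1 hp
        have hx : (q : ℤ) ∣ x := by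
          refine (hpr.dvd_or_dvd (a := D) ?_).resolve_left hpD
          have : D * x = b * (b * x + 2 * c * y) - 2 * c * (2 * a * x + b * y) := by
            rw [← hD]; ring
          rw [this]
          exact dvd_sub (h2.mul_left _) (h1.mul_left _)
        have hy : (q : ℤ) ∣ y := by
          refine (hpr.dvd_or_dvd (a := D) ?_).resolve_left hpD
          have : D * y = b * (2 * a * x + b * y) - 2 * a * (b * x + 2 * c * y) := by
            rw [← hD]; ring
          rw [this]
          exact dvd_sub (h1.mul_left _) (h2.mul_left _)
        obtain ⟨x', rfl⟩ := hx
        obtain ⟨y', rfl⟩ := hy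
        refine ⟨x', y', ?_⟩
        have hq0 : (q : ℤ) ^ 2 ≠ 0 := pow_ne_zero _ hpr.ne_zero
        have : a * x' ^ 2 + b * x' * y' + c * y' ^ 2 = n :=
          mul_right_cancel₀ hq0 (by linear_combination hxy)
        exact_mod_cast congrArg (Int.cast : ℤ → ℤ_[q]) this
      · obtain ⟨t, ht⟩ := quad_root _ _ ((c : ℤ_[q]) - (n : ℤ_[q])) hfv (hunit _ h2)
        push_cast at ht
        exact ⟨t * x, t * y + 1, by linear_combination ht⟩
    · obtain ⟨t, ht⟩ := quad_root _ _ ((a : ℤ_[q]) - (n : ℤ_[q])) hfv (hunit _ h1)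
      push_cast at ht
      exact ⟨t * x + 1, t * y, by linear_combination ht⟩
  · have hu : IsUnit (p : ℤ_[q]) := by
      rw [PadicInt.isUnit_iff]
      refine le_antisymm (PadicInt.norm_le_one _) (not_lt.1 fun h => hqp ?_)
      have h' : ‖((p : ℤ) : ℤ_[q])‖ < 1 := by simpa using h
      rw [PadicInt.norm_int_lt_one_iff_dvd] at h'
      exact (Nat.prime_dvd_prime_iff_eq hq.out hp).1 (by exact_mod_cast h')
    obtain ⟨δ, hδ⟩ := hu.exists_right_inv
    refine ⟨x * δ, y * δ, ?_⟩
    linear_combination δ ^ 2 * hcast + n * (p * δ + 1) * hδ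
end

section
/- Let D be a negative integer with D ≡ 0 or 1 (mod 4), let f(x,y) = a x² + b x y + c y² be a primitive positive definite integral binary quadratic form of discriminant D, let n be a positive integer, and let p be a prime not dividing D such that f represents n p². If f does not represent n, then the Kronecker symbol (D/p) = 1; that is, either p is odd and D is a nonzero square modulo p, or p = 2 and D ≡ 1 (mod 8). -/
/-- If a primitive positive definite integral binary quadratic form `f` of
discriminant `D < 0`, `D ≡ 0, 1 (mod 4)`, represents `n * p ^ 2` for a prime `p ∤ D`,
but does not represent `n`, then the Kronecker symbol `(D/p) = 1`, i.e. either `p` is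
odd and `D` is a nonzero square mod `p`, or `p = 2` and `D ≡ 1 (mod 8)`. -/
theorem kronecker_one_of_rep_np_sq_not_rep_n
    (D : ℤ) (hDneg : D < 0) (hDmod : D % 4 = 0 ∨ D % 4 = 1)
    (a b c : ℤ) (ha : 0 < a) (hprim : Int.gcd a (Int.gcd b c) = 1)
    (hD : b ^ 2 - 4 * a * c = D)
    (n : ℤ) (hn : 0 < n) (p : ℕ) (hp : p.Prime) (hpD : ¬ (p : ℤ) ∣ D)
    (hrep : ∃ x y : ℤ, a * x ^ 2 + b * x * y + c * y ^ 2 = n * (p : ℤ) ^ 2)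
    (hnrep : ¬ ∃ x y : ℤ, a * x ^ 2 + b * x * y + c * y ^ 2 = n) :
    (Odd p ∧ (D : ZMod p) ≠ 0 ∧ IsSquare (D : ZMod p)) ∨ (p = 2 ∧ D % 8 = 1) := by
  obtain ⟨x, y, h⟩ := hrep
  have hp0 : (p : ℤ) ≠ 0 := by exact_mod_cast hp.ne_zero
  have hxy : ¬ ((p : ℤ) ∣ x ∧ (p : ℤ) ∣ y) := by
    rintro ⟨⟨X, rfl⟩, ⟨Y, rfl⟩⟩
    apply hnrep
    refine ⟨X, Y, ?_⟩
    have h2 : (p : ℤ) ^ 2 ≠ 0 := pow_ne_zero 2 hp0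
    apply mul_right_cancel₀ h2
    rw [← h]
    ring
  rcases hp.eq_two_or_odd' with rfl | hodd
  · right
    refine ⟨rfl, ?_⟩
    have hb : Odd b := by
      by_contra hb
      rw [Int.not_odd_iff_even] at hb
      obtain ⟨k, rfl⟩ := hb
      exact hpD ⟨2 * k ^ 2 - 2 * a * c, by rw [← hD]; push_cast; ring⟩
    have hF : Even (a * x ^ 2 + b * x * y + c * y ^ 2) := by
      rw [h]; exact ⟨n * 2, by push_cast; ring⟩
    have hac : Even (a * c) := by
      have hxy' : ¬ (Even x ∧ Even y) := by
        simpa [even_iff_two_dvd] using hxy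
      have hb' : ¬ Even b := Int.not_even_iff_odd.mpr hb
      simp only [Int.even_add, Int.even_mul, Int.even_pow] at hF ⊢
      tauto
    obtain ⟨k, rfl⟩ := hb
    obtain ⟨m, hm⟩ := hac
    obtain ⟨t, ht⟩ := Int.even_mul_succ_self k
    have : D = 8 * (t - m) + 1 := by
      rw [← hD]; linear_combination 4 * ht - 4 * hm
    omega
  · left
    haveI : Fact p.Prime := ⟨hp⟩
    refine ⟨hodd, ?_, ?_⟩
    · rwa [Ne, ZMod.intCast_zmod_eq_zero_iff_dvd]
    · have h' : (a : ZMod p) * x ^ 2 + b * x * y + c * y ^ 2 = 0 := by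
        have := congrArg (Int.cast : ℤ → ZMod p) h
        push_cast at this
        simpa using this
      have hD' : (D : ZMod p) = b ^ 2 - 4 * a * c := by
        rw [← hD]; push_cast; ring
      by_cases hy : (y : ZMod p) = 0
      · have hx : (x : ZMod p) ≠ 0 := by
          intro hx
          rw [ZMod.intCast_zmod_eq_zero_iff_dvd] at hx hy
          exact hxy ⟨hx, hy⟩
        refine ⟨(2 * c * y + b * x) / x, ?_⟩
        rw [hD']
        field_simp
        linear_combination (-4 * (c : ZMod p)) * h'
      · refine ⟨(2 * a * x + b * y) / y, ?_⟩
        rw [hD']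
        field_simp
        linear_combination (-4 * (a : ZMod p)) * h'
end

section
/- Let D be a negative integer with D ≡ 0 or 1 (mod 4) and let n be a positive integer with gcd(n, D) = 1. If n is not represented by any primitive positive definite integral binary quadratic form of discriminant D, then for every prime p, the integer n p² is also not represented by any primitive positive definite integral binary quadratic form of discriminant D. -/
/-- For `D < 0` with `D ≡ 0, 1 (mod 4)` and `gcd(n, D) = 1`, if `n` is not
represented by any primitive positive definite integral binary quadratic form of
discriminant `D`, then neither is `n * p ^ 2` for any prime `p`. -/
theorem not_rep_np_sq_of_not_rep (D : ℤ) (hDneg : D < 0) (hDmod : D % 4 = 0 ∨ D % 4 = 1)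
    (n : ℕ) (hn : 0 < n) (hcop : Int.gcd (n : ℤ) D = 1)
    (hnrep : ¬ ∃ a b c x y : ℤ, 0 < a ∧ Int.gcd a (Int.gcd b c) = 1 ∧
        b ^ 2 - 4 * a * c = D ∧ a * x ^ 2 + b * x * y + c * y ^ 2 = (n : ℤ)) :
    ∀ p : ℕ, p.Prime →
      ¬ ∃ a b c x y : ℤ, 0 < a ∧ Int.gcd a (Int.gcd b c) = 1 ∧
          b ^ 2 - 4 * a * c = D ∧ a * x ^ 2 + b * x * y + c * y ^ 2 = (n : ℤ) * (p : ℤ) ^ 2 := by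
  intro p hp
  rintro ⟨a, b, c, x, y, ha, hprim, hD, hrep⟩
  have hp0 : (p : ℤ) ≠ 0 := by exact_mod_cast hp.ne_zero
  have hn0 : (0 : ℤ) < n := by exact_mod_cast hn
  have hpp : (0 : ℤ) < (n : ℤ) * (p : ℤ) ^ 2 := by positivity
  have hg : 0 < Int.gcd x y := by
    rw [Nat.pos_iff_ne_zero]
    intro h
    rw [Int.gcd_eq_zero_iff] at h
    obtain ⟨rfl, rfl⟩ := h
    norm_num at hrep
    omega
  obtain ⟨x', hx⟩ := Int.gcd_dvd_left x y
  obtain ⟨y', hy⟩ := Int.gcd_dvd_right x y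
  have hbez := Int.gcd_eq_gcd_ab x y
  set g : ℤ := (Int.gcd x y : ℤ) with hgdef
  have hg0 : (0 : ℤ) < g := by rw [hgdef]; exact_mod_cast hg
  generalize Int.gcdA x y = s at hbez
  generalize Int.gcdB x y = t at hbez
  clear_value g
  subst hx hy
  have hst : x' * s + y' * t = 1 := by
    apply mul_left_cancel₀ hg0.ne'
    linarith
  have hfac : g ^ 2 * (a * x' ^ 2 + b * x' * y' + c * y' ^ 2) = (n : ℤ) * (p : ℤ) ^ 2 := by
    rw [← hrep]; ring
  by_cases hpg : (p : ℤ) ∣ g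
  · obtain ⟨k, rfl⟩ := hpg
    refine hnrep ⟨a, b, c, k * x', k * y', ha, hprim, hD, ?_⟩
    apply mul_right_cancel₀ (pow_ne_zero 2 hp0)
    rw [← hfac]; ring
  · have hc : IsCoprime (g ^ 2) ((p : ℤ) ^ 2) :=
      (((Nat.prime_iff_prime_int.mp hp).coprime_iff_not_dvd.mpr hpg).symm).pow
    obtain ⟨m, hm⟩ : g ^ 2 ∣ (n : ℤ) := hc.dvd_of_dvd_mul_right ⟨_, hfac.symm⟩
    have hg2 : (0 : ℤ) < g ^ 2 := by positivity
    have hm0 : 0 < m := by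
      rw [hm] at hn0
      exact pos_of_mul_pos_right hn0 hg2.le
    have hfm : a * x' ^ 2 + b * x' * y' + c * y' ^ 2 = m * (p : ℤ) ^ 2 := by
      apply mul_left_cancel₀ hg2.ne'
      rw [hfac, hm]; ring
    have hmD : IsCoprime m D := by
      have h1 : IsCoprime (n : ℤ) D := Int.isCoprime_iff_gcd_eq_one.mpr hcop
      rw [hm] at h1
      exact h1.of_mul_left_right
    set B : ℤ := 2 * a * x' * (-t) + b * (x' * s + y' * (-t)) + 2 * c * y' * s with hB
    set C : ℤ := a * t ^ 2 - b * t * s + c * s ^ 2 with hC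
    have hdisc : B ^ 2 - 4 * m * ((p : ℤ) ^ 2 * C) = D := by
      have h2 : B ^ 2 - 4 * (a * x' ^ 2 + b * x' * y' + c * y' ^ 2) * C
          = (b ^ 2 - 4 * a * c) * (x' * s + y' * t) ^ 2 := by
        rw [hB, hC]; ring
      rw [hst, hD, hfm] at h2
      linarith
    have hmB : IsCoprime m B := by
      obtain ⟨u, v, huv⟩ := hmD
      exact ⟨u - v * (4 * ((p : ℤ) ^ 2 * C)), v * B, by rw [← huv, ← hdisc]; ring⟩
    refine hnrep ⟨m, B, (p : ℤ) ^ 2 * C, g, 0, hm0, ?_, hdisc, by rw [hm]; ring⟩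
    rw [← Int.gcd_assoc, Int.isCoprime_iff_gcd_eq_one.mp hmB]
    simp
end

section
/- Let D be a negative integer with D ≡ 0 or 1 (mod 4), let f(x,y) = a x² + b x y + c y² be a primitive positive definite integral binary quadratic form of discriminant D, and let n be a positive integer that is represented by some primitive positive definite integral binary quadratic form of discriminant D but is not represented by f over ℤ_q for some prime q (i.e., n is not represented by the genus of f). If f represents n p² for some prime p, then p divides D. -/
/-- Hensel: `A s² + B s + C` has a root in `ℤ_[p]` if `p ∣ A` and `p ∤ B`. -/
lemma quad_root_s7 (p : ℕ) [Fact p.Prime] (A B C : ℤ) (hA : (p : ℤ) ∣ A) (hB : ¬ (p : ℤ) ∣ B) :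
    ∃ s : ℤ_[p], (A : ℤ_[p]) * s ^ 2 + (B : ℤ_[p]) * s + (C : ℤ_[p]) = 0 := by
  have hA' : ‖(A : ℤ_[p])‖ < 1 := (PadicInt.norm_intCast_lt_one_iff).2 hA
  have hB' : ‖(B : ℤ_[p])‖ = 1 :=
    le_antisymm (PadicInt.norm_le_one _)
      (not_lt.1 fun h => hB ((PadicInt.norm_intCast_lt_one_iff).1 h))
  obtain ⟨u, hu⟩ := (PadicInt.isUnit_iff).2 hB'
  let r : ℤ_[p] := -(C : ℤ_[p]) * (↑u⁻¹ : ℤ_[p])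
  have hr : (B : ℤ_[p]) * r = -(C : ℤ_[p]) := by
    have : (u : ℤ_[p]) * (↑u⁻¹ : ℤ_[p]) = 1 := u.mul_inv
    rw [← hu]
    linear_combination (-(C : ℤ_[p])) * this
  have key : ∀ z : ℤ_[p], ‖(A : ℤ_[p]) * z‖ < 1 := fun z => by
    rw [norm_mul]
    calc _ ≤ ‖(A : ℤ_[p])‖ * 1 :=
          mul_le_mul_of_nonneg_left (PadicInt.norm_le_one z) (norm_nonneg _)
      _ < 1 := by simpa using hA'
  let F : Polynomial ℤ_[p] := Polynomial.C (A : ℤ_[p]) * Polynomial.X ^ 2 +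
    Polynomial.C (B : ℤ_[p]) * Polynomial.X + Polynomial.C (C : ℤ_[p])
  have hF : ∀ s, F.aeval s = (A : ℤ_[p]) * s ^ 2 + (B : ℤ_[p]) * s + (C : ℤ_[p]) := by
    intro s
    rw [Polynomial.coe_aeval_eq_eval]
    simp only [F, Polynomial.eval_add, Polynomial.eval_mul, Polynomial.eval_C,
      Polynomial.eval_pow, Polynomial.eval_X]
  have hF' : F.derivative.aeval r = (A : ℤ_[p]) * (2 * r) + (B : ℤ_[p]) := by
    rw [Polynomial.coe_aeval_eq_eval]
    simp only [F, Polynomial.derivative_add, Polynomial.derivative_C_mul,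
      Polynomial.derivative_X_pow, Polynomial.derivative_X, Polynomial.derivative_C,
      Polynomial.eval_add, Polynomial.eval_mul, Polynomial.eval_C,
      Polynomial.eval_pow, Polynomial.eval_X, Polynomial.eval_one, Polynomial.eval_zero]
    push_cast
    ring
  have hd : ‖F.derivative.aeval r‖ = 1 := by
    rw [hF', PadicInt.norm_add_eq_max_of_ne (by rw [hB']; exact (key _).ne), hB']
    exact max_eq_right (key _).le
  have hlt : ‖F.aeval r‖ < ‖F.derivative.aeval r‖ ^ 2 := by
    rw [hd, hF, one_pow]
    have : (A : ℤ_[p]) * r ^ 2 + (B : ℤ_[p]) * r + (C : ℤ_[p]) = (A : ℤ_[p]) * r ^ 2 := by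
      linear_combination hr
    rw [this]
    exact key _
  obtain ⟨z, hz, -⟩ := hensels_lemma hlt
  exact ⟨z, by rw [← hF]; exact hz⟩


/-- Let `f` be a primitive positive definite integral binary quadratic form
of discriminant `D < 0`, `D ≡ 0, 1 (mod 4)`, and let `n > 0` be represented by some
primitive positive definite form of discriminant `D` but not represented by `f` over
`ℤ_q` for some prime `q`. If `f` represents `n * p ^ 2` for a prime `p`, then `p ∣ D`. -/
theorem prime_dvd_disc_of_rep_np_sq
    (D : ℤ) (hDneg : D < 0) (hDmod : D % 4 = 0 ∨ D % 4 = 1)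
    (a b c : ℤ) (ha : 0 < a) (hprim : Int.gcd a (Int.gcd b c) = 1)
    (hD : b ^ 2 - 4 * a * c = D)
    (n : ℤ) (hn : 0 < n)
    (hrepsome : ∃ a' b' c' x y : ℤ, 0 < a' ∧ Int.gcd a' (Int.gcd b' c') = 1 ∧
        b' ^ 2 - 4 * a' * c' = D ∧ a' * x ^ 2 + b' * x * y + c' * y ^ 2 = n)
    (hnotgenus : ∃ (q : ℕ) (hq : Fact q.Prime), ¬ @RepresentedOverZq a b c n q hq)
    (p : ℕ) (hp : p.Prime)
    (hrep : ∃ x y : ℤ, a * x ^ 2 + b * x * y + c * y ^ 2 = n * (p : ℤ) ^ 2) :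
    (p : ℤ) ∣ D := by
  obtain ⟨q, hq, hnot⟩ := hnotgenus
  obtain ⟨x, y, hxy⟩ := hrep
  by_contra hpD
  apply hnot
  have hpp : Prime (p : ℤ) := Nat.prime_iff_prime_int.1 hp
  by_cases hqp : q = p
  · subst hqp
    have hdvd : (q : ℤ) ∣ a * x ^ 2 + b * x * y + c * y ^ 2 := by
      rw [hxy]; exact Dvd.intro_left _ (by ring : n * (q : ℤ) * q = _)
    by_cases h1 : (q : ℤ) ∣ 2 * a * x + b * y
    · by_cases h2 : (q : ℤ) ∣ b * x + 2 * c * y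
      · have hx : (q : ℤ) ∣ x := by
          have h : (q : ℤ) ∣ D * x := by
            have e : D * x = b * (b * x + 2 * c * y) - 2 * c * (2 * a * x + b * y) := by
              rw [← hD]; ring
            rw [e]; exact dvd_sub (h2.mul_left _) (h1.mul_left _)
          exact (hpp.dvd_or_dvd h).resolve_left hpD
        have hy : (q : ℤ) ∣ y := by
          have h : (q : ℤ) ∣ D * y := by
            have e : D * y = b * (2 * a * x + b * y) - 2 * a * (b * x + 2 * c * y) := by
              rw [← hD]; ring
            rw [e]; exact dvd_sub (h1.mul_left _) (h2.mul_left _)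
          exact (hpp.dvd_or_dvd h).resolve_left hpD
        obtain ⟨u, rfl⟩ := hx
        obtain ⟨v, rfl⟩ := hy
        have h0 : (q : ℤ) ^ 2 ≠ 0 := pow_ne_zero _ hpp.ne_zero
        have e : a * u ^ 2 + b * u * v + c * v ^ 2 = n := by
          apply mul_right_cancel₀ h0
          rw [← hxy]; ring
        refine ⟨u, v, ?_⟩
        exact_mod_cast e
      · obtain ⟨s, hs⟩ := quad_root_s7 q _ _ (c - n) hdvd h2
        refine ⟨s * x, s * y + 1, ?_⟩
        push_cast at hs
        linear_combination hs
    · obtain ⟨s, hs⟩ := quad_root_s7 q _ _ (a - n) hdvd h1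
      refine ⟨s * x + 1, s * y, ?_⟩
      push_cast at hs
      linear_combination hs
  · have hu : ‖((p : ℤ) : ℤ_[q])‖ = 1 := by
      refine le_antisymm (PadicInt.norm_le_one _) (not_lt.1 fun h => hqp ?_)
      have := (PadicInt.norm_intCast_lt_one_iff).1 h
      exact (Nat.prime_dvd_prime_iff_eq hq.out hp).1 (by exact_mod_cast this)
    obtain ⟨u, hu⟩ := (PadicInt.isUnit_iff).2 hu
    have hi : (u : ℤ_[q]) * (↑u⁻¹ : ℤ_[q]) = 1 := u.mul_inv
    have e : (a : ℤ_[q]) * x ^ 2 + b * x * y + c * y ^ 2 = n * (u : ℤ_[q]) ^ 2 := by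
      rw [hu]; exact_mod_cast hxy
    refine ⟨x * (↑u⁻¹ : ℤ_[q]), y * (↑u⁻¹ : ℤ_[q]), ?_⟩
    linear_combination (↑u⁻¹ : ℤ_[q]) ^ 2 * e +
      (n : ℤ_[q]) * ((u : ℤ_[q]) * (↑u⁻¹ : ℤ_[q]) + 1) * hi
end

section
/- Let D be a negative integer with D ≡ 0 or 1 (mod 4) and let p be a prime dividing D. If g is a primitive positive definite integral binary quadratic form of discriminant D that represents p, then g is ambiguous; that is, g is properly equivalent to its opposite g⁻(x,y) = g(x,−y). -/
/-- If a primitive positive definite integral binary quadratic form `g` of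
discriminant `D < 0`, `D ≡ 0, 1 (mod 4)`, represents a prime `p` dividing `D`, then `g`
is ambiguous, i.e. properly equivalent to its opposite. -/
theorem ambiguous_of_rep_prime_dvd_disc
    (D : ℤ) (hDneg : D < 0) (hDmod : D % 4 = 0 ∨ D % 4 = 1)
    (p : ℕ) (hp : p.Prime) (hpD : (p : ℤ) ∣ D)
    (a b c : ℤ) (ha : 0 < a) (hprim : Int.gcd a (Int.gcd b c) = 1)
    (hD : b ^ 2 - 4 * a * c = D)
    (hrep : ∃ x y : ℤ, a * x ^ 2 + b * x * y + c * y ^ 2 = (p : ℤ)) :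
    ProperEquiv a b c a (-b) c := by
  obtain ⟨x, y, hxy⟩ := hrep
  have hpp : Prime (p : ℤ) := Nat.prime_iff_prime_int.mp hp
  have hcop : IsCoprime x y := by
    rw [Int.isCoprime_iff_gcd_eq_one]
    obtain ⟨x', hx'⟩ := Int.gcd_dvd_left x y
    obtain ⟨y', hy'⟩ := Int.gcd_dvd_right x y
    have hsq : ((Int.gcd x y : ℤ)) * (Int.gcd x y : ℤ) ∣ (p : ℤ) := by
      generalize (Int.gcd x y : ℤ) = d at *
      refine ⟨a * x' ^ 2 + b * x' * y' + c * y' ^ 2, ?_⟩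
      rw [← hxy, hx', hy']
      ring
    have h := hpp.irreducible.squarefree _ hsq
    have h2 := Int.isUnit_iff.mp h
    omega
  obtain ⟨e, f, hef⟩ := hcop
  -- second basis vector is (-f, e)
  have hpB : (p : ℤ) ∣ 2 * a * x * (-f) + b * (x * e + y * (-f)) + 2 * c * y * e := by
    apply hpp.dvd_of_dvd_pow (n := 2)
    obtain ⟨q, hq⟩ := hpD
    refine ⟨q + 4 * (a * f ^ 2 - b * f * e + c * e ^ 2), ?_⟩
    have h1 : (p : ℤ) * q = (b ^ 2 - 4 * a * c) * (e * x + f * y) ^ 2 := by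
      rw [hef, hD, hq]; ring
    linear_combination -h1 + 4 * (a * f ^ 2 - b * f * e + c * e ^ 2) * hxy
  obtain ⟨k, hk⟩ := hpB
  obtain ⟨m, hm⟩ : ∃ m, m = -2 * f - k * x := ⟨_, rfl⟩
  obtain ⟨n, hn⟩ : ∃ n, n = 2 * e - k * y := ⟨_, rfl⟩
  have hdet : x * n - y * m = 2 := by
    rw [hm, hn]; linear_combination 2 * hef
  have horth : (2 * a * m + b * n) * x + (b * m + 2 * c * n) * y = 0 := by
    rw [hm, hn]; linear_combination 2 * hk - 2 * k * hxy
  obtain ⟨G, hG⟩ : ∃ G, G = a * m ^ 2 + b * m * n + c * n ^ 2 := ⟨_, rfl⟩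
  have hL : 2 * a * m + b * n = -y * G := by
    have : 2 * (2 * a * m + b * n) = 2 * (-y * G) := by
      rw [hG]; linear_combination n * horth - (2 * a * m + b * n) * hdet
    linarith
  have hM : b * m + 2 * c * n = x * G := by
    have : 2 * (b * m + 2 * c * n) = 2 * (x * G) := by
      rw [hG]; linear_combination -m * horth - (b * m + 2 * c * n) * hdet
    linarith
  refine ⟨-1 - y * m, -x * m, -y * n, 1 - x * n, ?_, ?_⟩
  · linear_combination hdet
  · intro X Y
    linear_combination (-(x * Y + y * X) * X) * hL + ((x * Y + y * X) * Y) * hM + (x * Y + y * X) ^ 2 * hG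
end

section
/- Let a be a positive integer that is not a perfect square, and let b be any positive integer. Then there exist positive integers M and r with gcd(r, M) = 1, and a finite set S of primes, such that every odd prime p ∉ S with p ≡ r (mod M) satisfies: a is a quadratic non-residue modulo p (so the Legendre symbol (a/p) = −1), and −b is a nonzero quadratic residue modulo p (so the Legendre symbol (−b/p) = 1). -/
open scoped NumberTheorySymbols

lemma aux_odd_s9 (m k : ℕ) (hm : Odd m) (hk : 0 < k) : J((m : ℤ) | 4 * m * k - 1) = 1 := by
  have hmp : 0 < m := hm.pos
  have hpos : 0 < m * k := Nat.mul_pos hmp hk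
  obtain ⟨n, hn⟩ : ∃ n, n = 4 * m * k - 1 := ⟨_, rfl⟩
  rw [← hn]
  have hn4 : n % 4 = 3 := by rw [hn, mul_assoc]; omega
  have hnodd : Odd n := Nat.odd_iff.mpr (by omega)
  have hn1 : n + 1 = m * (4 * k) := by
    have : m * (4 * k) = 4 * (m * k) := by ring
    rw [hn, mul_assoc]; omega
  have hJ : J((n : ℤ) | m) = J(-1 | m) := by
    apply jacobiSym.mod_left'
    apply Int.ModEq.symm
    rw [Int.modEq_iff_dvd]
    refine ⟨4 * k, ?_⟩
    have : (n : ℤ) + 1 = m * (4 * k) := by exact_mod_cast hn1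
    linarith
  rw [jacobiSym.at_neg_one hm] at hJ
  rcases Nat.odd_mod_four_iff.mp (Nat.odd_iff.mp hm) with h | h
  · rw [jacobiSym.quadratic_reciprocity_one_mod_four h hnodd, hJ, ZMod.χ₄_nat_one_mod_four h]
  · rw [jacobiSym.quadratic_reciprocity_three_mod_four h hn4, hJ, ZMod.χ₄_nat_three_mod_four h]
    norm_num

lemma aux_all (c : ℕ) : 0 < c → ∀ k : ℕ, 0 < k → J((c : ℤ) | 4 * c * k - 1) = 1 := by
  induction c using Nat.strong_induction_on with
  | _ c ih =>
    intro hc k hk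
    rcases Nat.even_or_odd c with h | h
    · obtain ⟨d, rfl⟩ := h
      have hd : 0 < d := by omega
      have h1 := ih d (by omega) hd (2 * k) (by omega)
      have e : 4 * (d + d) * k = 4 * d * (2 * k) := by ring
      rw [e]
      have hp : 0 < d * k := Nat.mul_pos hd hk
      have e2 : 4 * d * (2 * k) = 8 * (d * k) := by ring
      have e3 : ((d + d : ℕ) : ℤ) = 2 * d := by push_cast; ring
      rw [e3, jacobiSym.mul_left, h1, jacobiSym.at_two (Nat.odd_iff.mpr (by omega)),
        ZMod.χ₈_nat_eq_if_mod_eight, e2, if_neg (by omega), if_pos (by omega)]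
      norm_num
    · exact aux_odd_s9 c k h hk

lemma exists_prime_crt (u v i j B : ℕ) (hu : 0 < u) (hv : 0 < v) (huv : u.Coprime v)
    (hi : i.Coprime u) (hj : j.Coprime v) :
    ∃ x, x.Prime ∧ B < x ∧ x ≡ i [MOD u] ∧ x ≡ j [MOD v] := by
  obtain ⟨z, hz1, hz2⟩ := Nat.chineseRemainder huv i j
  have hzu : z.Coprime u := by
    rw [Nat.Coprime, hz1.gcd_eq]; exact hi
  have hzv : z.Coprime v := by
    rw [Nat.Coprime, hz2.gcd_eq]; exact hj
  have hz : z.Coprime (u * v) := Nat.Coprime.mul_right hzu hzv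
  obtain ⟨x, hx, hp, hmod⟩ := Nat.forall_exists_prime_gt_and_modEq B
    (by positivity : u * v ≠ 0) hz
  exact ⟨x, hp, hx, (hmod.of_mul_right v).trans hz1, (hmod.of_mul_left u).trans hz2⟩

lemma exists_neg (a B : ℕ) (ha : 0 < a) (hnsq : ¬ IsSquare a) :
    ∃ x, x.Prime ∧ B < x ∧ J((a : ℤ) | x) = -1 := by
  obtain ⟨s, t, hst, hs⟩ := Nat.sq_mul_squarefree a
  have hs1 : s ≠ 1 := by
    rintro rfl
    exact hnsq ⟨t, by rw [← hst]; ring⟩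
  obtain ⟨q, hq, s', rfl⟩ := Nat.exists_prime_and_dvd hs1
  have hcop : q.Coprime s' := (Nat.squarefree_mul_iff.mp hs).1
  have hs' : 0 < s' := Nat.pos_of_ne_zero (by rintro rfl; simp at hs)
  have ht : 0 < t := Nat.pos_of_ne_zero (by rintro rfl; simp at hst; omega)
  suffices h : ∃ x, x.Prime ∧ B + a < x ∧ J((q : ℤ) | x) = -1 ∧ J((s' : ℤ) | x) = 1 by
    obtain ⟨x, hx, hB, h1, h2⟩ := h
    refine ⟨x, hx, by omega, ?_⟩
    have htx : (t : ℤ).gcd x = 1 := by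
      rw [Int.gcd_natCast_natCast]
      apply Nat.Coprime.symm
      rw [hx.coprime_iff_not_dvd]
      intro hd
      have : x ∣ a := by rw [← hst]; exact (hd.trans (dvd_pow_self t two_ne_zero)).mul_right _
      have := Nat.le_of_dvd ha this
      omega
    rw [← hst]
    push_cast
    rw [jacobiSym.mul_left, jacobiSym.mul_left, jacobiSym.sq_one' htx, h1, h2]
    norm_num
  rcases hq.eq_two_or_odd' with rfl | hqo
  · have hso : Odd s' := by simpa using hcop
    have h8 : Nat.Coprime 8 s' := by
      have := Nat.Coprime.pow_left 3 hcop
      simpa using this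
    obtain ⟨x, hx, hB, h1, h2⟩ := exists_prime_crt 8 s' 5 1 (B + a) (by norm_num) hs' h8
      (by norm_num) (by simp)
    have h1' : x % 8 = 5 := h1
    refine ⟨x, hx, hB, ?_, ?_⟩
    · have := jacobiSym.at_two (b := x) (Nat.odd_iff.mpr (by omega))
      rw [ZMod.χ₈_nat_eq_if_mod_eight, if_neg (by omega), if_neg (by omega)] at this
      exact_mod_cast this
    · rw [jacobiSym.quadratic_reciprocity_one_mod_four' hso (by omega)]
      have := jacobiSym.mod_left' (a₁ := (x : ℤ)) (a₂ := 1) (b := s') (by exact_mod_cast h2)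
      rw [this, jacobiSym.one_left]
  · have : Fact q.Prime := ⟨hq⟩
    obtain ⟨w, hw⟩ := FiniteField.exists_nonsquare (F := ZMod q) (by
      rw [ZMod.ringChar_zmod_n]; rintro rfl; revert hqo; decide)
    have hwv : ((w.val : ℕ) : ZMod q) = w := ZMod.natCast_zmod_val w
    have hwc : w.val.Coprime q := by
      apply Nat.Coprime.symm
      rw [hq.coprime_iff_not_dvd, ← ZMod.natCast_eq_zero_iff, hwv]
      rintro rfl
      exact hw ⟨0, by simp⟩
    have h4 : Nat.Coprime (4 * s') q := by
      apply Nat.Coprime.mul_left _ hcop.symm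
      have : Nat.Coprime 2 q := by simpa using hqo
      simpa using Nat.Coprime.pow_left 2 this
    obtain ⟨x, hx, hB, h1, h2⟩ := exists_prime_crt (4 * s') q 1 w.val (B + a) (by omega) hq.pos h4
      (by simp) hwc
    have hx4 : x % 4 = 1 := h1.of_mul_right s'
    have hxo : Odd x := Nat.odd_iff.mpr (by omega)
    refine ⟨x, hx, hB, ?_, ?_⟩
    · rw [jacobiSym.quadratic_reciprocity_one_mod_four' hqo hx4,
        ZMod.nonsquare_iff_jacobiSym_eq_neg_one]
      have : (x : ZMod q) = w := by rw [← hwv]; exact (ZMod.natCast_eq_natCast_iff _ _ _).mpr h2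
      rw [Int.cast_natCast, this]; exact hw
    · rw [jacobiSym.mod_right' s' hxo, h1, ← jacobiSym.mod_right' s' odd_one, jacobiSym.one_right]

lemma jac_mod (a : ℤ) (M x y : ℕ) (hx : Odd x) (hy : Odd y) (hd : 4 * a.natAbs ∣ M)
    (h : x ≡ y [MOD M]) : J(a | x) = J(a | y) := by
  have h' : x % (4 * a.natAbs) = y % (4 * a.natAbs) := h.of_dvd hd
  rw [jacobiSym.mod_right a hx, h', ← jacobiSym.mod_right a hy]

lemma exists_r (a b : ℕ) (ha : 0 < a) (hnsq : ¬ IsSquare a) (hb : 0 < b) :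
    ∃ r, 0 < r ∧ r.Coprime (4 * a * b) ∧ J((a : ℤ) | r) = -1 ∧ J(-(b : ℤ) | r) = 1 := by
  obtain ⟨x, hx, hB, hJ⟩ := exists_neg a (4 * a * b) ha hnsq
  have hab : 0 < a * b := Nat.mul_pos ha hb
  have hM : 4 * a * b = 4 * (a * b) := by ring
  have hxc : x.Coprime (4 * a * b) := by
    rw [hx.coprime_iff_not_dvd]
    intro h
    have := Nat.le_of_dvd (by omega) h
    omega
  have hbx : (-(b : ℤ)).gcd x = 1 := by
    rw [Int.neg_gcd, Int.gcd_natCast_natCast]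
    exact (Nat.Coprime.coprime_dvd_right (Dvd.intro_left _ rfl) hxc).symm
  rcases jacobiSym.eq_one_or_neg_one hbx with h | h
  · exact ⟨x, hx.pos, hxc, hJ, h⟩
  · have hy : (4 * a * b - 1) % 4 = 3 := by omega
    have hyp : 0 < 4 * a * b - 1 := by omega
    have : NeZero x := ⟨hx.ne_zero⟩
    have : NeZero (4 * a * b - 1) := ⟨hyp.ne'⟩
    refine ⟨x * (4 * a * b - 1), Nat.mul_pos hx.pos hyp, ?_, ?_, ?_⟩
    · apply Nat.Coprime.mul_left hxc
      have : 4 * a * b = (4 * a * b - 1) + 1 := by omega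
      conv_rhs => rw [this]
      simp
    · rw [jacobiSym.mul_right, hJ, aux_all a ha b hb]; norm_num
    · have e : 4 * a * b = 4 * b * a := by ring
      rw [jacobiSym.mul_right, h, jacobiSym.neg _ (Nat.odd_iff.mpr (by omega)),
        ZMod.χ₄_nat_three_mod_four hy, e, aux_all b hb a ha]
      norm_num


/-- For a nonsquare positive integer `a` and any positive integer `b`,
there is an arithmetic progression `r (mod M)` with `gcd(r, M) = 1` and a finite
exceptional set `S` of primes such that every odd prime `p ∉ S` with `p ≡ r (mod M)`
satisfies `(a/p) = -1` and `(-b/p) = 1`. -/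
theorem exists_AP_legendre (a b : ℕ) (ha : 0 < a) (hnsq : ¬ IsSquare a) (hb : 0 < b) :
    ∃ (M r : ℕ) (S : Finset ℕ), 0 < M ∧ 0 < r ∧ Nat.Coprime r M ∧
      ∀ p : ℕ, p.Prime → Odd p → p ∉ S → p % M = r % M →
        ¬ IsSquare ((a : ZMod p)) ∧
          IsSquare (((-(b : ℤ) : ℤ) : ZMod p)) ∧ (((-(b : ℤ) : ℤ) : ZMod p)) ≠ 0 := by
  obtain ⟨r, hr, hc, h1, h2⟩ := exists_r a b ha hnsq hb
  have hro : Odd r := by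
    have : Nat.Coprime r 2 := Nat.Coprime.coprime_dvd_right ⟨2 * a * b, by ring⟩ hc
    simpa using this
  refine ⟨4 * a * b, r, ∅, by positivity, hr, hc, ?_⟩
  intro p hp hpo _ hmod
  have : Fact p.Prime := ⟨hp⟩
  have k1 : J((a : ℤ) | p) = -1 := by
    rw [jac_mod a (4 * a * b) p r hpo hro (by simp) hmod, h1]
  have k2 : J(-(b : ℤ) | p) = 1 := by
    rw [jac_mod (-(b : ℤ)) (4 * a * b) p r hpo hro ⟨a, by simp; ring⟩ hmod, h2]
  refine ⟨?_, ZMod.isSquare_of_jacobiSym_eq_one k2, ?_⟩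
  · have := ZMod.nonsquare_iff_jacobiSym_eq_neg_one.mp k1
    simpa using this
  · intro h0
    rw [← jacobiSym.legendreSym.to_jacobiSym, (legendreSym.eq_zero_iff p _).mpr h0] at k2
    norm_num at k2
end

section
/- Let ℓ(x,y) = a x² + b x y + c y² be a primitive positive definite integral binary quadratic form (gcd(a,b,c) = 1) of discriminant D = b² − 4ac < 0, regarded as the quadratic lattice (ℤ², Q) with Q(x,y) = a x² + b x y + c y². Let p be a prime with Kronecker symbol (D/p) = 1, i.e., either p is odd, p ∤ D, and D is a nonzero square modulo p, or p = 2 and D ≡ 1 (mod 8). Then there are exactly two ℤ-submodules M of ℤ² of index p (as additive groups) such that p divides Q(v) for every v ∈ M. -/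
/-- The submodule `M` of `ℤ²` has index `p` (as an additive subgroup) and the norm of the
sublattice `M` of the binary lattice given by `(a, b, c)` is contained in `pℤ`. -/
def IndexPNormP (a b c : ℤ) (p : ℕ) (M : Submodule ℤ (Fin 2 → ℤ)) : Prop :=
  M.toAddSubgroup.index = p ∧
    ∀ v ∈ M, (p : ℤ) ∣ (a * (v 0) ^ 2 + b * (v 0) * (v 1) + c * (v 1) ^ 2)

/-- The linear form `r x + s y` with values in `ZMod p`. -/
def linForm (p : ℕ) (r s : ZMod p) : (Fin 2 → ℤ) →+ ZMod p where
  toFun v := r * (v 0 : ZMod p) + s * (v 1 : ZMod p)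
  map_zero' := by simp
  map_add' v w := by simp; ring

/-- The kernel of the linear form. -/
def kerForm (p : ℕ) (r s : ZMod p) : Submodule ℤ (Fin 2 → ℤ) :=
  AddSubgroup.toIntSubmodule (linForm p r s).ker

theorem mem_kerForm (p : ℕ) (r s : ZMod p) (v : Fin 2 → ℤ) :
    v ∈ kerForm p r s ↔ r * (v 0 : ZMod p) + s * (v 1 : ZMod p) = 0 := Iff.rfl

theorem index_kerForm (p : ℕ) [Fact p.Prime] (r s : ZMod p) (h : r ≠ 0 ∨ s ≠ 0) :
    (kerForm p r s).toAddSubgroup.index = p := by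
  have hs : Function.Surjective (linForm p r s) := by
    intro z
    rcases h with h | h
    · obtain ⟨n, hn⟩ := ZMod.intCast_surjective (r⁻¹ * z)
      refine ⟨![n, 0], ?_⟩
      simp [linForm, hn, h]
    · obtain ⟨n, hn⟩ := ZMod.intCast_surjective (s⁻¹ * z)
      refine ⟨![0, n], ?_⟩
      simp [linForm, hn, h]
  change (linForm p r s).ker.index = p
  rw [AddSubgroup.index_ker, AddMonoidHom.range_eq_top.mpr hs]
  simp

theorem eq_of_le_index {p : ℕ} (hp : p ≠ 0) {M N : Submodule ℤ (Fin 2 → ℤ)}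
    (hM : M.toAddSubgroup.index = p) (hN : N.toAddSubgroup.index = p) (h : M ≤ N) : M = N := by
  apply le_antisymm h
  have h' : M.toAddSubgroup ≤ N.toAddSubgroup := h
  have e := AddSubgroup.relIndex_mul_index h'
  rw [hM, hN] at e
  have : M.toAddSubgroup.relIndex N.toAddSubgroup = 1 := by
    apply Nat.eq_of_mul_eq_mul_right (Nat.pos_of_ne_zero hp); simpa using e
  exact AddSubgroup.relIndex_eq_one.mp this

theorem exists_factor (a b c : ℤ) (D : ℤ) (hD : D = b ^ 2 - 4 * a * c)
    (p : ℕ) [Fact p.Prime]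
    (hkron : (Odd p ∧ ¬ (p : ℤ) ∣ D ∧ IsSquare (D : ZMod p)) ∨ (p = 2 ∧ D % 8 = 1)) :
    ∃ r s t u : ZMod p, r * u - s * t ≠ 0 ∧ (a : ZMod p) = r * t ∧
      (b : ZMod p) = r * u + s * t ∧ (c : ZMod p) = s * u := by
  have hDz : (D : ZMod p) = (b : ZMod p) ^ 2 - 4 * a * c := by rw [hD]; push_cast; ring
  have hD0 : (D : ZMod p) ≠ 0 := by
    rw [Ne, ZMod.intCast_zmod_eq_zero_iff_dvd]
    rcases hkron with h | ⟨rfl, h⟩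
    · exact h.2.1
    · omega
  by_cases ha : (a : ZMod p) = 0
  · refine ⟨b, c, 0, 1, ?_, by simp [ha], by simp, by simp⟩
    intro hb
    apply hD0
    rw [hDz, ha]
    have : (b : ZMod p) = 0 := by simpa using hb
    simp [this]
  rcases hkron with ⟨hodd, -, d, hd⟩ | ⟨rfl, h8⟩
  · have h2 : (2 : ZMod p) ≠ 0 := by
      have : Fact (2 < p) := ⟨by
        have := (Fact.out : p.Prime).two_le
        rcases hodd with ⟨k, hk⟩; omega⟩
      exact Ring.two_ne_zero (by rw [ZMod.ringChar_zmod_n]; exact this.out.ne')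
    have hd0 : d ≠ 0 := by rintro rfl; simp [hd] at hD0
    refine ⟨a, (b + d) / 2, 1, (b - d) / (2 * a), ?_, by simp, ?_, ?_⟩
    · have : (a : ZMod p) * ((b - d) / (2 * a)) - (b + d) / 2 * 1 = -d := by
        field_simp; ring
      rw [this]; simpa using hd0
    · field_simp; ring
    · field_simp
      linear_combination hDz - hd
  · have hc : (c : ZMod 2) = 0 := by
      rw [ZMod.intCast_zmod_eq_zero_iff_dvd] at ha
      rw [ZMod.intCast_zmod_eq_zero_iff_dvd]
      by_contra hc
      have ha1 : a % 2 = 1 := by omega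
      have hc1 : c % 2 = 1 := by omega
      have hac : (a * c) % 2 = 1 := by simp [Int.mul_emod, ha1, hc1]
      have hb8 : b ^ 2 % 8 = 0 ∨ b ^ 2 % 8 = 1 ∨ b ^ 2 % 8 = 4 := by
        have : b % 8 = 0 ∨ b % 8 = 1 ∨ b % 8 = 2 ∨ b % 8 = 3 ∨ b % 8 = 4 ∨ b % 8 = 5 ∨
          b % 8 = 6 ∨ b % 8 = 7 := by omega
        rcases this with h | h | h | h | h | h | h | h <;> simp [pow_two, Int.mul_emod, h]
      rw [mul_assoc] at hD
      omega
    refine ⟨1, 0, a, b, ?_, by simp, by simp, by simp [hc]⟩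
    intro hb
    apply hD0
    rw [hDz, hc]
    have : (b : ZMod 2) = 0 := by simpa using hb
    simp [this]

/-- Let `(a, b, c)` be a primitive positive definite integral binary
quadratic form of discriminant `D < 0`, and `p` a prime with `(D/p) = 1`. Then there
are exactly two index-`p` sublattices of `ℤ²` whose norm is contained in `pℤ`. -/
theorem exactly_two_sublattices
    (a b c : ℤ) (ha : 0 < a) (hprim : Int.gcd a (Int.gcd b c) = 1)
    (D : ℤ) (hD : D = b ^ 2 - 4 * a * c) (hDneg : D < 0)
    (p : ℕ) (hp : p.Prime)
    (hkron : (Odd p ∧ ¬ (p : ℤ) ∣ D ∧ IsSquare (D : ZMod p)) ∨ (p = 2 ∧ D % 8 = 1)) :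
    ∃ M₁ M₂ : Submodule ℤ (Fin 2 → ℤ), M₁ ≠ M₂ ∧
      IndexPNormP a b c p M₁ ∧ IndexPNormP a b c p M₂ ∧
      ∀ M : Submodule ℤ (Fin 2 → ℤ), IndexPNormP a b c p M → M = M₁ ∨ M = M₂ := by
  have : Fact p.Prime := ⟨hp⟩
  obtain ⟨r, s, t, u, hdet, ea, eb, ec⟩ := exists_factor a b c D hD p hkron
  have key : ∀ v : Fin 2 → ℤ, (p : ℤ) ∣ (a * (v 0) ^ 2 + b * (v 0) * (v 1) + c * (v 1) ^ 2) ↔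
      linForm p r s v * linForm p t u v = 0 := by
    intro v
    rw [← ZMod.intCast_zmod_eq_zero_iff_dvd]
    push_cast
    rw [ea, eb, ec]
    change _ ↔ (r * (v 0 : ZMod p) + s * (v 1 : ZMod p)) *
      (t * (v 0 : ZMod p) + u * (v 1 : ZMod p)) = 0
    ring_nf
  have i1 : (kerForm p r s).toAddSubgroup.index = p := by
    apply index_kerForm
    by_contra! h
    simp [h.1, h.2] at hdet
  have i2 : (kerForm p t u).toAddSubgroup.index = p := by
    apply index_kerForm
    by_contra! h
    simp [h.1, h.2] at hdet
  refine ⟨kerForm p r s, kerForm p t u, ?_, ⟨i1, ?_⟩, ⟨i2, ?_⟩, ?_⟩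
  · intro h
    obtain ⟨m, hm⟩ := ZMod.intCast_surjective (-s)
    obtain ⟨n, hn⟩ := ZMod.intCast_surjective r
    have h1 : (![m, n] : Fin 2 → ℤ) ∈ kerForm p r s := by
      rw [mem_kerForm]; simp [hm, hn]; ring
    rw [h, mem_kerForm] at h1
    simp only [Matrix.cons_val_zero, Matrix.cons_val_one, hm, hn] at h1
    exact hdet (by linear_combination h1)
  · intro v hv
    rw [key, show linForm p r s v = 0 from hv, zero_mul]
  · intro v hv
    rw [key, show linForm p t u v = 0 from hv, mul_zero]
  · rintro M ⟨hi, hM⟩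
    by_cases h1 : M ≤ kerForm p r s
    · exact Or.inl (eq_of_le_index hp.ne_zero hi i1 h1)
    by_cases h2 : M ≤ kerForm p t u
    · exact Or.inr (eq_of_le_index hp.ne_zero hi i2 h2)
    exfalso
    obtain ⟨v, hv, hv1⟩ := SetLike.not_le_iff_exists.mp h1
    obtain ⟨w, hw, hw2⟩ := SetLike.not_le_iff_exists.mp h2
    have hv1' : linForm p r s v ≠ 0 := hv1
    have hw2' : linForm p t u w ≠ 0 := hw2
    have hv2 := (mul_eq_zero.mp ((key v).mp (hM v hv))).resolve_left hv1'
    have hw1 := (mul_eq_zero.mp ((key w).mp (hM w hw))).resolve_right hw2'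
    have := (key (v + w)).mp (hM _ (M.add_mem hv hw))
    rw [map_add, map_add, hv2, hw1, add_zero, zero_add] at this
    exact mul_ne_zero hv1' hw2' this
end

section
/- The ternary quadratic form g(x,y,z) = 2x² + 2y² + 5z² represents n² for every integer n ≥ 2 (i.e., for each n ≥ 2 there exist x, y, z ∈ ℤ with 2x² + 2y² + 5z² = n²), but g does not represent 1. Consequently, g is a ternary isolation of the unary form x², whose proper sublattices are exactly ⟨n²⟩ for n ≥ 2. -/
/-- `n²` is represented by `2x² + 2y² + 5z²`. -/
def SqRep (n : ℤ) : Prop := ∃ x y z : ℤ, 2 * x ^ 2 + 2 * y ^ 2 + 5 * z ^ 2 = n ^ 2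

/-- Quaternionic identity: a sum of four squares on an index-5 sublattice. -/
lemma sqRep_core (n a b c d : ℤ) (hn : n = a ^ 2 + b ^ 2 + c ^ 2 + d ^ 2)
    (h : (5 : ℤ) ∣ a - b + 2 * c + 2 * d) : SqRep n := by
  obtain ⟨k, hk⟩ := h
  obtain ⟨v, hv⟩ : ∃ v, v = k - d := ⟨_, rfl⟩
  obtain ⟨u, hu⟩ : ∃ u, u = d + 2 * v - c := ⟨_, rfl⟩
  obtain ⟨t, ht⟩ : ∃ t, t = d + v := ⟨_, rfl⟩
  obtain ⟨s, hs⟩ : ∃ s, s = b + u := ⟨_, rfl⟩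
  have ea : a = s + t + u := by omega
  have eb : b = s - u := by omega
  have ec : c = t - u + v := by omega
  have ed : d = t - v := by omega
  refine ⟨s ^ 2 - t ^ 2 + s * t + u ^ 2 - s * u + 2 * t * u - v ^ 2 + 2 * s * v + t * v + u * v,
    s ^ 2 - t ^ 2 + s * t + u ^ 2 + s * u - 2 * t * u - v ^ 2 - 2 * s * v - t * v + u * v,
    t ^ 2 + 2 * s * t + u ^ 2 - 2 * u * v, ?_⟩
  rw [hn, ea, eb, ec, ed]
  ring

lemma exists_small_residue (x : ℤ) :
    ∃ y : ℤ, y ^ 2 = x ^ 2 ∧ (y % 5 = 0 ∨ y % 5 = 1 ∨ y % 5 = 2) ∧ (¬ 5 ∣ x → ¬ 5 ∣ y) := by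
  by_cases h : x % 5 = 0 ∨ x % 5 = 1 ∨ x % 5 = 2
  · exact ⟨x, rfl, h, id⟩
  · exact ⟨-x, by ring, by omega, by omega⟩

set_option maxHeartbeats 4000000 in
/-- If two coordinates are prime to 5, signs and order can be arranged suitably. -/
lemma sqRep_two (n a b c d : ℤ) (hn : n = a ^ 2 + b ^ 2 + c ^ 2 + d ^ 2)
    (ha : ¬ (5 : ℤ) ∣ a) (hb : ¬ (5 : ℤ) ∣ b) : SqRep n := by
  obtain ⟨a', ea, ra, na⟩ := exists_small_residue a
  obtain ⟨b', eb, rb, nb⟩ := exists_small_residue b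
  obtain ⟨c', ec, rc, -⟩ := exists_small_residue c
  obtain ⟨d', ed, rd, -⟩ := exists_small_residue d
  rw [← ea, ← eb, ← ec, ← ed] at hn
  have na := na ha
  have nb := nb hb
  clear ea eb ec ed ha hb
  by_contra hG
  have h1 := mt (sqRep_core n a' (-d') (-b') (-c') (by rw [hn]; ring)) hG
  have h2 := mt (sqRep_core n a' b' c' (-d') (by rw [hn]; ring)) hG
  have h3 := mt (sqRep_core n (-b') c' a' d' (by rw [hn]; ring)) hG
  have h4 := mt (sqRep_core n a' c' b' (-d') (by rw [hn]; ring)) hG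
  have h5 := mt (sqRep_core n a' c' (-b') (-d') (by rw [hn]; ring)) hG
  have h6 := mt (sqRep_core n a' (-c') b' (-d') (by rw [hn]; ring)) hG
  have h7 := mt (sqRep_core n a' (-c') (-b') d' (by rw [hn]; ring)) hG
  have h8 := mt (sqRep_core n a' c' b' d' (by rw [hn]; ring)) hG
  clear hG hn
  replace ra : a' % 5 = 1 ∨ a' % 5 = 2 := by clear h1 h2 h3 h4 h5 h6 h7 h8; omega
  replace rb : b' % 5 = 1 ∨ b' % 5 = 2 := by clear h1 h2 h3 h4 h5 h6 h7 h8; omega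
  clear na nb
  rcases ra with ra | ra <;> rcases rb with rb | rb <;>
    rcases rc with rc | rc | rc <;> rcases rd with rd | rd | rd <;> omega

/-- A nonzero sum of three squares has a representation with first entry prime to 5. -/
lemma three_squares_prime_to_five (N : ℕ) : ∀ b c d : ℤ,
    b.natAbs + c.natAbs + d.natAbs ≤ N → ¬ (b = 0 ∧ c = 0 ∧ d = 0) →
    ∃ b' c' d' : ℤ, b' ^ 2 + c' ^ 2 + d' ^ 2 = b ^ 2 + c ^ 2 + d ^ 2 ∧ ¬ (5 : ℤ) ∣ b' := by
  induction N with
  | zero => intro b c d h h0; omega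
  | succ N ih =>
    intro b c d h h0
    by_cases hb : (5 : ℤ) ∣ b
    · by_cases hc : (5 : ℤ) ∣ c
      · by_cases hd : (5 : ℤ) ∣ d
        · obtain ⟨b, rfl⟩ := hb
          obtain ⟨c, rfl⟩ := hc
          obtain ⟨d, rfl⟩ := hd
          obtain ⟨b', c', d', e, hb'⟩ := ih b c d (by omega) (by omega)
          by_cases h3 : (5 : ℤ) ∣ 3 * b' + 4 * c'
          · exact ⟨3 * b' - 4 * c', 4 * b' + 3 * c', 5 * d', by linear_combination 25 * e,
              by omega⟩
          · exact ⟨3 * b' + 4 * c', 4 * b' - 3 * c', 5 * d', by linear_combination 25 * e, h3⟩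
        · exact ⟨d, b, c, by ring, hd⟩
      · exact ⟨c, b, d, by ring, hc⟩
    · exact ⟨b, c, d, rfl, hb⟩

lemma sqRep_one (n a b c d : ℤ) (hn : n = a ^ 2 + b ^ 2 + c ^ 2 + d ^ 2)
    (hsq : ¬ IsSquare n) (ha : ¬ (5 : ℤ) ∣ a) : SqRep n := by
  by_cases h0 : b = 0 ∧ c = 0 ∧ d = 0
  · obtain ⟨rfl, rfl, rfl⟩ := h0
    exact absurd ⟨a, by rw [hn]; ring⟩ hsq
  · obtain ⟨b', c', d', e, hb⟩ := three_squares_prime_to_five _ b c d le_rfl h0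
    exact sqRep_two n a b' c' d' (by linear_combination hn - e) ha hb

lemma sqRep_prime (p : ℕ) (hp : p.Prime) : SqRep p := by
  obtain ⟨a, b, c, d, h⟩ := Nat.sum_four_squares p
  have hn : (p : ℤ) = (a : ℤ) ^ 2 + (b : ℤ) ^ 2 + (c : ℤ) ^ 2 + (d : ℤ) ^ 2 := by
    exact_mod_cast h.symm
  have hsq : ¬ IsSquare (p : ℤ) := (Nat.prime_iff_prime_int.mp hp).irreducible.not_isSquare
  by_cases ha : (5 : ℤ) ∣ a
  · by_cases hb : (5 : ℤ) ∣ b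
    · by_cases hc : (5 : ℤ) ∣ c
      · by_cases hd : (5 : ℤ) ∣ d
        · exact sqRep_core p a b c d hn (by omega)
        · exact sqRep_one p d a b c (by linear_combination hn) hsq hd
      · exact sqRep_one p c a b d (by linear_combination hn) hsq hc
    · exact sqRep_one p b a c d (by linear_combination hn) hsq hb
  · exact sqRep_one p a b c d hn hsq ha

/-- The ternary quadratic form `2x² + 2y² + 5z²` represents `n²` for every
integer `n ≥ 2`, but does not represent `1`; hence it is a ternary isolation of the
unary form `x²`. -/
theorem ternary_isolation_of_x_sq :
    (∀ n : ℤ, 2 ≤ n → ∃ x y z : ℤ, 2 * x ^ 2 + 2 * y ^ 2 + 5 * z ^ 2 = n ^ 2) ∧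
      ¬ ∃ x y z : ℤ, 2 * x ^ 2 + 2 * y ^ 2 + 5 * z ^ 2 = 1 := by
  constructor
  · intro n hn
    lift n to ℕ using by omega
    obtain ⟨p, hp, m, rfl⟩ := Nat.exists_prime_and_dvd (n := n) (by omega)
    obtain ⟨x, y, z, h⟩ := sqRep_prime p hp
    refine ⟨m * x, m * y, m * z, ?_⟩
    push_cast
    linear_combination (m : ℤ) ^ 2 * h
  · rintro ⟨x, y, z, h⟩
    have hz : z = 0 := by
      by_contra hz
      have : 0 < z ^ 2 := by positivity
      nlinarith [sq_nonneg x, sq_nonneg y]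
    subst hz
    omega
end
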